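/- Let k, m, n be positive integers with k+m ≤ n. For all w, w′ ∈ Sₙ, the structure constant c^{w′}_{w, r[k,m]} equals the number of paths of length m in the k-Bruhat order from w to w′ whose labels are strictly increasing: w⁽¹⁾(a₁) < w⁽²⁾(a₂) < ⋯ < w⁽ᵐ⁾(a_m). -/

import Mathlib

open Equiv MvPolynomial

attribute [local instance] Classical.propDecidable

namespace SchubertPieri

/-- Position `j ∈ {1,…,N}` (1-indexed) as an element of `Fin N` (0-indexed). -/
def pos (N : ℕ) [NeZero N] (j : ℕ) : Fin N :=
  ⟨(j - 1) % N, Nat.mod_lt _ (Nat.pos_of_ne_zero (NeZero.ne N))⟩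

/-- The transposition `t_{a,b}` interchanging positions `a` and `b` (1-indexed). -/
def t (N : ℕ) [NeZero N] (a b : ℕ) : Equiv.Perm (Fin N) :=
  Equiv.swap (pos N a) (pos N b)

/-- The value `w(j)` for `j ∈ {1,…,N}` (1-indexed). -/
def val {N : ℕ} [NeZero N] (w : Equiv.Perm (Fin N)) (j : ℕ) : ℕ :=
  (w (pos N j) : ℕ) + 1

/-- The length of `w`: its number of inversions. -/
def len {N : ℕ} (w : Equiv.Perm (Fin N)) : ℕ :=
  (Finset.univ.filter fun p : Fin N × Fin N => p.1 < p.2 ∧ w p.2 < w p.1).card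

/-- The longest permutation `w₀ : j ↦ N+1-j`. -/
def w0 (N : ℕ) : Equiv.Perm (Fin N) :=
  ⟨Fin.rev, Fin.rev, Fin.rev_rev, Fin.rev_rev⟩

/-- The product `t_{a 0, b 0} ⋯ t_{a (i-1), b (i-1)}`. -/
def tProd (N : ℕ) [NeZero N] (a b : ℕ → ℕ) (i : ℕ) : Equiv.Perm (Fin N) :=
  ((List.range i).map fun j => t N (a j) (b j)).prod

/-- `r[k,m] = t_{k,k+1} t_{k,k+2} ⋯ t_{k,k+m}`, the (m+1)-cycle with
`r[k,m](k) = k+m` and `r[k,m](j) = j-1` for `k+1 ≤ j ≤ k+m`. -/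
def rPerm (N k m : ℕ) [NeZero N] : Equiv.Perm (Fin N) :=
  ((List.range m).map fun i => t N k (k + 1 + i)).prod

/-- `c[k,m] = t_{k,k+1} t_{k-1,k+1} ⋯ t_{k-m+1,k+1}`, the (m+1)-cycle with
`c[k,m](j) = j+1` for `k-m+1 ≤ j ≤ k` and `c[k,m](k+1) = k-m+1`. -/
def cPerm (N k m : ℕ) [NeZero N] : Equiv.Perm (Fin N) :=
  ((List.range m).map fun i => t N (k - i) (k + 1)).prod

/-- The conditions that `aᵢ ≤ k < bᵢ` (with all indices in `{1,…,N}`) and that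
`ℓ(w t_{a₁ b₁} ⋯ t_{aᵢ bᵢ}) = ℓ(w) + i` for `1 ≤ i ≤ m`. -/
def StepOK (N k m : ℕ) [NeZero N] (w : Equiv.Perm (Fin N)) (a b : ℕ → ℕ) : Prop :=
  (∀ i, i < m → 1 ≤ a i ∧ a i ≤ k ∧ k < b i ∧ b i ≤ N) ∧
  (∀ i, i ≤ m → len (w * tProd N a b i) = len w + i)

/-- `w →_{r[k,m]} w'`. -/
def RelR (N k m : ℕ) [NeZero N] (w w' : Equiv.Perm (Fin N)) : Prop :=
  ∃ a b : ℕ → ℕ, StepOK N k m w a b ∧ w' = w * tProd N a b m ∧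
    (∀ i j, i < m → j < m → i ≠ j → b i ≠ b j)

/-- `w →_{c[k,m]} w'`. -/
def RelC (N k m : ℕ) [NeZero N] (w w' : Equiv.Perm (Fin N)) : Prop :=
  ∃ a b : ℕ → ℕ, StepOK N k m w a b ∧ w' = w * tProd N a b m ∧
    (∀ i j, i < m → j < m → i ≠ j → a i ≠ a j)

/-- The divided difference operator `∂ᵢ f = (f - sᵢ·f)/(xᵢ - xᵢ₊₁)` (1-indexed `i`);
the quotient is exact, and is recovered here as the (unique) witness of divisibility. -/
noncomputable def divDiff {N : ℕ} [NeZero N] (i : ℕ) (f : MvPolynomial (Fin N) ℤ) :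
    MvPolynomial (Fin N) ℤ :=
  if h : (X (pos N i) - X (pos N (i + 1))) ∣ (f - rename (⇑(t N i (i + 1))) f) then
    h.choose
  else 0

/-- `∂_{a₁} ∘ ⋯ ∘ ∂_{a_p}` applied to `f`, for a word `l = [a₁,…,a_p]`. -/
noncomputable def divDiffWord {N : ℕ} [NeZero N] (l : List ℕ) (f : MvPolynomial (Fin N) ℤ) :
    MvPolynomial (Fin N) ℤ :=
  l.foldr divDiff f

/-- Auxiliary: produce a reduced word for `w` by repeatedly removing a descent. -/
def redWordAux (N : ℕ) [NeZero N] : ℕ → Equiv.Perm (Fin N) → List ℕ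
  | 0, _ => []
  | fuel + 1, w =>
    match ((List.range (N - 1)).map (· + 1)).find? (fun i => decide (val w (i + 1) < val w i)) with
    | none => []
    | some i => redWordAux N fuel (w * t N i (i + 1)) ++ [i]

/-- A canonical reduced word `(a₁,…,a_p)` for `w`, i.e. `w = s_{a₁} ⋯ s_{a_p}` with `p = ℓ(w)`. -/
def redWord (N : ℕ) [NeZero N] (w : Equiv.Perm (Fin N)) : List ℕ :=
  redWordAux N (N * N) w

/-- The staircase monomial `x₁^{N-1} x₂^{N-2} ⋯ x_{N-1}`. -/
noncomputable def staircase (N : ℕ) : MvPolynomial (Fin N) ℤ :=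
  ∏ i : Fin N, X i ^ (N - 1 - (i : ℕ))

/-- The Schubert polynomial `𝔖_w = ∂_{w⁻¹w₀}(x₁^{N-1} ⋯ x_{N-1})`. -/
noncomputable def schubertPoly (N : ℕ) [NeZero N] (w : Equiv.Perm (Fin N)) :
    MvPolynomial (Fin N) ℤ :=
  divDiffWord (redWord N (w⁻¹ * w0 N)) (staircase N)

/-- The ideal of `Rₙ` generated by the symmetric polynomials with zero constant term. -/
noncomputable def symIdeal (N : ℕ) : Ideal (MvPolynomial (Fin N) ℤ) :=
  Ideal.span {f : MvPolynomial (Fin N) ℤ | f.IsSymmetric ∧ constantCoeff f = 0}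

/-- The ring `Hₙ = Rₙ/𝒮`. -/
abbrev HRing (N : ℕ) := MvPolynomial (Fin N) ℤ ⧸ symIdeal N

/-- The class of the Schubert polynomial `𝔖_w` in `Hₙ`. -/
noncomputable def SS (N : ℕ) [NeZero N] (w : Equiv.Perm (Fin N)) : HRing N :=
  Ideal.Quotient.mk (symIdeal N) (schubertPoly N w)

/-- The complete homogeneous symmetric polynomial of degree `m` in `x₁,…,x_k`. -/
noncomputable def hPoly (N k m : ℕ) : MvPolynomial (Fin N) ℤ :=
  ∑ s ∈ (Finset.univ.filter fun i : Fin N => (i : ℕ) < k).sym m,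
    (Multiset.map X (s : Multiset (Fin N))).prod

/-- The elementary symmetric polynomial of degree `m` in `x₁,…,x_k`. -/
noncomputable def ePoly (N k m : ℕ) : MvPolynomial (Fin N) ℤ :=
  ∑ s ∈ (Finset.univ.filter fun i : Fin N => (i : ℕ) < k).powersetCard m, ∏ i ∈ s, X i

/-- Covering relation of the `k`-Bruhat order. -/
def kCover (N k : ℕ) [NeZero N] (w w' : Equiv.Perm (Fin N)) : Prop :=
  ∃ a b : ℕ, 1 ≤ a ∧ a ≤ k ∧ k < b ∧ b ≤ N ∧ w' = w * t N a b ∧ len w' = len w + 1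

/-- The (strict) `k`-Bruhat order `<ₖ`. -/
def kBruhat (N k : ℕ) [NeZero N] : Equiv.Perm (Fin N) → Equiv.Perm (Fin N) → Prop :=
  Relation.TransGen (kCover N k)

/-- The label `w⁽ⁱ⁺¹⁾(a_{i+1})` (0-indexed `i`) of the `(i+1)`-st step of a path. -/
def label {N : ℕ} [NeZero N] (w : Equiv.Perm (Fin N)) (a b : ℕ → ℕ) (i : ℕ) : ℕ :=
  val (w * tProd N a b (i + 1)) (a i)

/-- `(a,b)` encodes a path of length `m` in the `k`-Bruhat order from `w` to `w'`
(normalized so that `a i = b i = 0` for `i ≥ m`, making the encoding unique). -/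
def PathWit (N k m : ℕ) [NeZero N] (w w' : Equiv.Perm (Fin N))
    (ab : (ℕ → ℕ) × (ℕ → ℕ)) : Prop :=
  StepOK N k m w ab.1 ab.2 ∧ w' = w * tProd N ab.1 ab.2 m ∧
    ∀ i, m ≤ i → ab.1 i = 0 ∧ ab.2 i = 0

/-- Paths of length `m` in the `k`-Bruhat order from `w` to `w'` with strictly
increasing labels. -/
def IncPaths (N k m : ℕ) [NeZero N] (w w' : Equiv.Perm (Fin N)) :
    Set ((ℕ → ℕ) × (ℕ → ℕ)) :=
  {ab | PathWit N k m w w' ab ∧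
    ∀ i j, i < j → j < m → label w ab.1 ab.2 i < label w ab.1 ab.2 j}

/-- Paths of length `m` in the `k`-Bruhat order from `w` to `w'` with strictly
decreasing labels. -/
def DecPaths (N k m : ℕ) [NeZero N] (w w' : Equiv.Perm (Fin N)) :
    Set ((ℕ → ℕ) × (ℕ → ℕ)) :=
  {ab | PathWit N k m w w' ab ∧
    ∀ i j, i < j → j < m → label w ab.1 ab.2 j < label w ab.1 ab.2 i}


/-- The cycle `(x₁ x₂ … x_r)` (sending `x₁ ↦ x₂ ↦ ⋯ ↦ x_r ↦ x₁`), as a product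
of transpositions. -/
def cycleList (N : ℕ) [NeZero N] (l : List ℕ) : Equiv.Perm (Fin N) :=
  ((l.zip l.tail).map fun p => t N p.1 p.2).prod

/-- The Grassmannian permutation `h[k;p,q]` of descent `k` and hook shape `(p,1^{q-1})`:
the `(p+q)`-cycle `(k-q+1  k-q+2 … k  k+p  k+p-1 … k+1)`. -/
def hookPerm (N k p q : ℕ) [NeZero N] : Equiv.Perm (Fin N) :=
  cycleList N (((List.range q).map fun i => k - q + 1 + i) ++
    ((List.range p).reverse.map fun i => k + 1 + i))

/-- `w|ₚ ∈ S_{N-1}`: delete row `p` and column `w(p)` from the permutation matrix of `w`. -/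
def drop {N : ℕ} (w : Equiv.Perm (Fin (N + 1))) (p : Fin (N + 1)) : Equiv.Perm (Fin N) :=
  Equiv.removeNone (((finSuccEquiv' p).symm.trans (w : Fin (N + 1) ≃ Fin (N + 1))).trans
    (finSuccEquiv' (w p)))

/-- `lam` is a partition with at most `k` parts (1-indexed parts `lam 1 ≥ lam 2 ≥ ⋯`,
normalized by `lam 0 = 0`). -/
def IsPartFun (k : ℕ) (lam : ℕ → ℕ) : Prop :=
  lam 0 = 0 ∧ (∀ j, 1 ≤ j → lam (j + 1) ≤ lam j) ∧ ∀ j, k < j → lam j = 0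

/-- `h_d(x₁,…,x_k)` for an integer `d`, with `h_d = 0` for `d < 0`. -/
noncomputable def hPolyZ (N k : ℕ) (d : ℤ) : MvPolynomial (Fin N) ℤ :=
  if 0 ≤ d then hPoly N k d.toNat else 0

/-- The Schur polynomial `s_λ(x₁,…,x_k)`, via the Jacobi–Trudi determinant
`det(h_{λᵢ+j-i})_{1 ≤ i,j ≤ k}`. -/
noncomputable def schurPoly (N k : ℕ) (lam : ℕ → ℕ) : MvPolynomial (Fin N) ℤ :=
  (Matrix.of fun i j : Fin k =>
    hPolyZ N k ((lam ((i : ℕ) + 1) : ℤ) + (j : ℕ) - (i : ℕ))).det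

/-- `r_j = #{i : aᵢ = j}` (with `i` ranging over `0,…,m-1`, 0-indexed). -/
def rJ (a : ℕ → ℕ) (m j : ℕ) : ℕ := ((Finset.range m).filter fun i => a i = j).card

/-- `μ_j = r_{j+1} + ⋯ + r_k`. -/
def muJ (a : ℕ → ℕ) (m k j : ℕ) : ℕ :=
  if j = 0 then 0 else ∑ j' ∈ Finset.Icc (j + 1) k, rJ a m j'

/-- `λ_j = μ_j + r_j`. -/
def lamJ (a : ℕ → ℕ) (m k j : ℕ) : ℕ :=
  if j = 0 then 0 else muJ a m k j + rJ a m j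

/-- `d_j = #{i : bᵢ = N+1-j}` (with `i` ranging over `0,…,m-1`, 0-indexed). -/
def dJ (b : ℕ → ℕ) (m N j : ℕ) : ℕ :=
  ((Finset.range m).filter fun i => b i = N + 1 - j).card

/-- `μ′_j = d_{j+1} + ⋯ + d_{N-k}`. -/
def muJ' (b : ℕ → ℕ) (m N k j : ℕ) : ℕ :=
  if j = 0 then 0 else ∑ j' ∈ Finset.Icc (j + 1) (N - k), dJ b m N j'

/-- `λ′_j = μ′_j + d_j`. -/
def lamJ' (b : ℕ → ℕ) (m N k j : ℕ) : ℕ :=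
  if j = 0 then 0 else muJ' b m N k j + dJ b m N j

/-- The conjugate (transpose) partition: `νᵗ_j = #{i : νᵢ ≥ j}`, for `ν` with at
most `k` parts. -/
def conjPart (k : ℕ) (nu : ℕ → ℕ) (j : ℕ) : ℕ :=
  if j = 0 then 0 else ((Finset.Icc 1 k).filter fun i => j ≤ nu i).card

/-- `wv` is the Grassmannian permutation of descent `k` and shape `nu`:
`wv(j) = j + ν_{k+1-j}` for `1 ≤ j ≤ k`, and `wv` is increasing on `{k+1,…,N}`. -/
def IsGrassOf (N k : ℕ) [NeZero N] (nu : ℕ → ℕ) (wv : Equiv.Perm (Fin N)) : Prop :=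
  (∀ j, 1 ≤ j → j ≤ k → val wv j = j + nu (k + 1 - j)) ∧
  (∀ j, k < j → j < N → val wv j < val wv (j + 1))

/-- Paths of length `m` in the `k`-Bruhat order from `w` to `w'` whose labels
increase strictly for the first `p` steps and decrease strictly thereafter
(positions `p, p+1, …, m` being decreasing, 1-indexed). -/
def IncDecPaths (N k m p : ℕ) [NeZero N] (w w' : Equiv.Perm (Fin N)) :
    Set ((ℕ → ℕ) × (ℕ → ℕ)) :=
  {ab | PathWit N k m w w' ab ∧
    (∀ i j, i < j → j < p → label w ab.1 ab.2 i < label w ab.1 ab.2 j) ∧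
    (∀ i j, p - 1 ≤ i → i < j → j < m → label w ab.1 ab.2 j < label w ab.1 ab.2 i)}

/-- Paths of length `m` in the `k`-Bruhat order from `w` to `w'` whose labels
decrease strictly for the first `q` steps and increase strictly thereafter. -/
def DecIncPaths (N k m q : ℕ) [NeZero N] (w w' : Equiv.Perm (Fin N)) :
    Set ((ℕ → ℕ) × (ℕ → ℕ)) :=
  {ab | PathWit N k m w w' ab ∧
    (∀ i j, i < j → j < q → label w ab.1 ab.2 j < label w ab.1 ab.2 i) ∧
    (∀ i j, q - 1 ≤ i → i < j → j < m → label w ab.1 ab.2 i < label w ab.1 ab.2 j)}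


section
variable {N : ℕ}

theorem len_mul_swap (u : Perm (Fin N)) (p q : Fin N) :
    len (u * swap p q) = (Finset.univ.filter fun x : Fin N × Fin N =>
      u x.2 < u x.1 ∧ swap p q x.1 < swap p q x.2).card := by
  unfold len
  apply Finset.card_bij (fun x _ => (swap p q x.1, swap p q x.2))
  · intro x hx
    rw [Finset.mem_filter] at hx ⊢
    simpa [and_comm] using hx
  · intro x _ y _ h
    simpa [Prod.ext_iff] using h
  · intro x hx
    refine ⟨(swap p q x.1, swap p q x.2), ?_, ?_⟩
    · rw [Finset.mem_filter] at hx ⊢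
      simpa [and_comm] using hx
    · simp

theorem len_down (u : Perm (Fin N)) {p q : Fin N} (hpq : p < q) (h : u q < u p) :
    len (u * swap p q) < len u := by
  rw [len_mul_swap]
  unfold len
  have hmem : (p, q) ∈ (Finset.univ.filter fun x : Fin N × Fin N => x.1 < x.2 ∧ u x.2 < u x.1) := by
    simp [hpq, h]
  rw [← Finset.card_erase_add_one hmem, Nat.lt_succ_iff]
  apply Finset.card_le_card_of_injOn
    (fun x => if x.1 < x.2 then x else (swap p q x.1, swap p q x.2))
  · rintro ⟨i, j⟩ hx
    simp only [Finset.coe_filter, Finset.mem_univ, true_and, Set.mem_ofPred_eq] at hx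
    simp only [Finset.coe_erase, Finset.coe_filter, Finset.mem_univ, true_and, Set.mem_sdiff,
      Set.mem_ofPred_eq, Set.mem_singleton_iff]
    obtain ⟨h1, h2⟩ := hx
    have hij : i ≠ j := by rintro rfl; exact lt_irrefl _ h1
    split_ifs with hlt
    · refine ⟨⟨hlt, h1⟩, ?_⟩
      rintro ⟨⟩
      simp at h2
      exact absurd h2 (not_lt.mpr hpq.le)
    · simp only [swap_apply_def] at h2 ⊢
      grind
  · rintro ⟨i, j⟩ hx ⟨i', j'⟩ hy hxy
    simp only [Finset.coe_filter, Finset.mem_univ, true_and, Set.mem_ofPred_eq] at hx hy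
    obtain ⟨h1, h2⟩ := hx
    obtain ⟨h3, h4⟩ := hy
    dsimp only at hxy
    split_ifs at hxy with h5 h6 h6
    · exact hxy
    · exfalso
      simp only [Prod.mk.injEq] at hxy
      obtain ⟨rfl, rfl⟩ := hxy
      simp at h2
      exact h6 h2
    · exfalso
      simp only [Prod.mk.injEq] at hxy
      obtain ⟨rfl, rfl⟩ := hxy
      simp at h4
      exact h5 h4
    · simpa [Prod.ext_iff] using hxy

theorem len_up (u : Perm (Fin N)) {p q : Fin N} (hpq : p < q) (h : u p < u q) :
    len u < len (u * swap p q) := by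
  have := len_down (u * swap p q) hpq (by simpa using h)
  simpa [mul_assoc] using this

theorem len_down_iff (u : Perm (Fin N)) {p q : Fin N} (hpq : p < q) :
    len (u * swap p q) < len u ↔ u q < u p := by
  constructor
  · intro h
    by_contra h'
    have h2 : u p < u q := lt_of_le_of_ne (not_lt.mp h') (fun e => hpq.ne (u.injective e))
    have := len_up u hpq h2
    omega
  · exact len_down u hpq

theorem len_adj (u : Perm (Fin N)) {p q : Fin N} (hpq : p.val + 1 = q.val) (h : u q < u p) :
    len (u * swap p q) + 1 = len u := by
  rw [len_mul_swap]
  unfold len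
  have hlt : p < q := by rw [Fin.lt_def]; omega
  have hmem : (p, q) ∈ (Finset.univ.filter fun x : Fin N × Fin N => x.1 < x.2 ∧ u x.2 < u x.1) := by
    simp [hlt, h]
  rw [← Finset.card_erase_add_one hmem]
  congr 2
  ext ⟨i, j⟩
  simp only [Finset.mem_filter, Finset.mem_univ, true_and, Finset.mem_erase, ne_eq, Prod.mk.injEq]
  simp only [swap_apply_def]
  clear hmem
  have k1 : i < q ↔ i ≤ p := by simp only [Fin.lt_def, Fin.le_def]; omega
  have k2 : j < q ↔ j ≤ p := by simp only [Fin.lt_def, Fin.le_def]; omega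
  have k3 : p < i ↔ q ≤ i := by simp only [Fin.lt_def, Fin.le_def]; omega
  have k4 : p < j ↔ q ≤ j := by simp only [Fin.lt_def, Fin.le_def]; omega
  constructor
  · rintro ⟨h1, h2⟩
    split_ifs at h2 <;> grind
  · rintro ⟨h1, h2, h3⟩
    refine ⟨h3, ?_⟩
    split_ifs <;> grind

theorem len_adj_up (u : Perm (Fin N)) {p q : Fin N} (hpq : p.val + 1 = q.val) (h : u p < u q) :
    len (u * swap p q) = len u + 1 := by
  have := len_adj (u * swap p q) hpq (by simpa using h)
  simpa [mul_assoc] using this.symm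

theorem len_one : len (1 : Perm (Fin N)) = 0 := by
  unfold len
  rw [Finset.card_eq_zero, Finset.filter_eq_empty_iff]
  rintro ⟨i, j⟩ _ ⟨h1, h2⟩
  exact absurd h1 (not_lt.mpr (by simpa using h2.le))

/-- not a cover if there is an intermediate value -/
theorem len_not_cover (u : Perm (Fin N)) {p r q : Fin N} (h1 : p < r) (h2 : r < q)
    (h3 : u p < u r) (h4 : u r < u q) : len u + 1 ≠ len (u * swap p q) := by
  have e : u * swap p q = u * swap p r * swap r q * swap p r := by
    have : swap p q = swap p r * swap r q * swap p r := by
      ext x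
      simp only [Perm.mul_apply, swap_apply_def]
      grind
    rw [this]; simp only [mul_assoc]
  have a1 := len_up u h1 h3
  have a2 := len_up (u * swap p r) h2 (by
    simp only [Perm.mul_apply, swap_apply_right]
    rw [swap_apply_of_ne_of_ne (h1.trans h2).ne' h2.ne']
    exact h3.trans h4)
  have a3 := len_up (u * swap p r * swap r q) h1 (by
    simp only [Perm.mul_apply, swap_apply_left]
    rw [swap_apply_of_ne_of_ne h1.ne (h1.trans h2).ne, swap_apply_left,
      swap_apply_of_ne_of_ne (h1.trans h2).ne' h2.ne']
    exact h4)
  rw [← e] at a3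
  omega

theorem exists_descent (u : Perm (Fin N)) (hu : u ≠ 1) :
    ∃ p q : Fin N, p.val + 1 = q.val ∧ u q < u p := by
  by_contra hcon
  push Not at hcon
  apply hu
  cases N with
  | zero => ext x; exact x.elim0
  | succ n =>
    have hm : StrictMono u := by
      rw [Fin.strictMono_iff_lt_succ]
      intro i
      have := hcon i.castSucc i.succ (by simp)
      exact lt_of_le_of_ne this (fun e => by
        have := u.injective e
        exact absurd this (by simp [Fin.ext_iff]))
    have := Subsingleton.elim (hm.orderIsoOfSurjective _ u.surjective) (OrderIso.refl _)
    ext x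
    have h2 := congrArg (fun f => f x) this
    simpa using congrArg Fin.val h2

theorem adj_cases (u : Perm (Fin N)) {p q : Fin N} (hpq : p.val + 1 = q.val) :
    (u p < u q ∧ len (u * swap p q) = len u + 1) ∨ (u q < u p ∧ len (u * swap p q) + 1 = len u) := by
  rcases lt_trichotomy (u p) (u q) with h | h | h
  · exact Or.inl ⟨h, len_adj_up u hpq h⟩
  · have := u.injective h
    subst this; omega
  · exact Or.inr ⟨h, len_adj u hpq h⟩

theorem len_mul_le (u v : Perm (Fin N)) : len (u * v) ≤ len u + len v := by
  induction h : len v using Nat.strong_induction_on generalizing v with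
  | _ L ih =>
    by_cases hv : v = 1
    · subst hv; simp
    · obtain ⟨p, q, hpq, hd⟩ := exists_descent v hv
      have h1 := len_adj v hpq hd
      have h2 := ih (len (v * swap p q)) (by omega) (v * swap p q) rfl
      rcases adj_cases (u * v) hpq with h3 | h3 <;> rw [mul_assoc] at h3 <;> omega

theorem len_inv_w0 (w : Perm (Fin N)) : len w + len (w⁻¹ * w0 N) = len (w0 N) := by
  have e1 : len w = (Finset.univ.filter fun x : Fin N × Fin N =>
      x.1 < x.2 ∧ w⁻¹ x.2 < w⁻¹ x.1).card := by
    unfold len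
    apply Finset.card_bij (fun x _ => (w x.2, w x.1))
    · intro x hx
      rw [Finset.mem_filter] at hx ⊢
      simpa [and_comm] using hx
    · intro x _ y _ h
      simp [Prod.ext_iff] at h
      exact Prod.ext h.2 h.1
    · intro x hx
      refine ⟨(w⁻¹ x.2, w⁻¹ x.1), ?_, ?_⟩
      · rw [Finset.mem_filter] at hx ⊢
        simpa [and_comm] using hx
      · simp
  have e2 : len (w⁻¹ * w0 N) = (Finset.univ.filter fun x : Fin N × Fin N =>
      x.1 < x.2 ∧ w⁻¹ x.1 < w⁻¹ x.2).card := by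
    unfold len
    apply Finset.card_bij (fun x _ => (Fin.rev x.2, Fin.rev x.1))
    · intro x hx
      rw [Finset.mem_filter] at hx ⊢
      simpa [w0] using hx
    · intro x _ y _ h
      simp [Prod.ext_iff] at h
      exact Prod.ext h.2 h.1
    · intro x hx
      refine ⟨(Fin.rev x.2, Fin.rev x.1), ?_, ?_⟩
      · rw [Finset.mem_filter] at hx ⊢
        simpa [w0] using hx
      · simp
  have e3 : len (w0 N) = (Finset.univ.filter fun x : Fin N × Fin N => x.1 < x.2).card := by
    unfold len
    congr 1
    ext x
    simp [w0]
  rw [e1, e2, e3, ← Finset.card_union_of_disjoint]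
  · congr 1
    ext ⟨i, j⟩
    simp only [Finset.mem_union, Finset.mem_filter, Finset.mem_univ, true_and]
    constructor
    · rintro (h | h) <;> exact h.1
    · intro h
      rcases lt_trichotomy (w⁻¹ i) (w⁻¹ j) with h1 | h1 | h1
      · exact Or.inr ⟨h, h1⟩
      · exact absurd (w⁻¹.injective h1) h.ne
      · exact Or.inl ⟨h, h1⟩
  · rw [Finset.disjoint_filter]
    rintro x _ ⟨_, h⟩ ⟨_, h'⟩
    exact absurd h (not_lt.mpr h'.le)

theorem len_eq_zero {u : Perm (Fin N)} (h : len u = 0) : u = 1 := by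
  by_contra hu
  obtain ⟨p, q, hpq, hd⟩ := exists_descent u hu
  have := len_adj u hpq hd
  omega

theorem eq_w0_of_len {v : Perm (Fin N)} (h : len v = len (w0 N)) : v = w0 N := by
  have h1 := len_inv_w0 v
  have h2 : len (v⁻¹ * w0 N) = 0 := by omega
  have := len_eq_zero h2
  exact inv_mul_eq_one.mp this

theorem len_le (u : Perm (Fin N)) : len u ≤ N * N := by
  unfold len
  refine (Finset.card_le_univ _).trans ?_
  simp

end

section
variable {N : ℕ}

/-- divided difference at two positions -/
noncomputable def dd (p q : Fin N) (f : MvPolynomial (Fin N) ℤ) : MvPolynomial (Fin N) ℤ :=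
  if h : (X p - X q) ∣ (f - rename (⇑(swap p q)) f) then h.choose else 0

theorem dd_dvd (p q : Fin N) (f : MvPolynomial (Fin N) ℤ) :
    (X p - X q) ∣ (f - rename (⇑(swap p q)) f) := by
  induction f using MvPolynomial.induction_on with
  | C a => simp
  | add f g hf hg =>
    have : f + g - rename (⇑(swap p q)) (f + g) =
      (f - rename (⇑(swap p q)) f) + (g - rename (⇑(swap p q)) g) := by
      rw [map_add]; ring
    rw [this]; exact dvd_add hf hg
  | mul_X f j hf =>
    have : f * X j - rename (⇑(swap p q)) (f * X j) =
      (f - rename (⇑(swap p q)) f) * X j + rename (⇑(swap p q)) f * (X j - X (swap p q j)) := by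
      rw [map_mul, rename_X]; ring
    rw [this]
    refine dvd_add (hf.mul_right _) (Dvd.dvd.mul_left ?_ _)
    rw [swap_apply_def]
    split_ifs with h1 h2
    · rw [h1]
    · rw [h2, ← neg_sub (X p), dvd_neg]
    · simp

theorem dd_spec (p q : Fin N) (f : MvPolynomial (Fin N) ℤ) :
    (X p - X q) * dd p q f = f - rename (⇑(swap p q)) f := by
  unfold dd
  rw [dif_pos (dd_dvd p q f)]
  exact (dd_dvd p q f).choose_spec.symm

theorem X_sub_ne {p q : Fin N} (h : p ≠ q) : (X p - X q : MvPolynomial (Fin N) ℤ) ≠ 0 := by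
  rw [sub_ne_zero]
  exact fun e => h (X_injective e)

theorem dd_unique {p q : Fin N} (h : p ≠ q) {f g : MvPolynomial (Fin N) ℤ}
    (e : (X p - X q) * g = f - rename (⇑(swap p q)) f) : dd p q f = g := by
  apply mul_left_cancel₀ (X_sub_ne h)
  rw [dd_spec, e]

theorem dd_add {p q : Fin N} (h : p ≠ q) (f g : MvPolynomial (Fin N) ℤ) :
    dd p q (f + g) = dd p q f + dd p q g := by
  apply dd_unique h
  rw [mul_add, dd_spec, dd_spec, map_add]; ring

theorem dd_mul {p q : Fin N} (h : p ≠ q) (f g : MvPolynomial (Fin N) ℤ) :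
    dd p q (f * g) = dd p q f * g + rename (⇑(swap p q)) f * dd p q g := by
  apply dd_unique h
  rw [map_mul]
  linear_combination g * dd_spec p q f + rename (⇑(swap p q)) f * dd_spec p q g

theorem dd_symm_mul {p q : Fin N} (h : p ≠ q) (f g : MvPolynomial (Fin N) ℤ)
    (hf : rename (⇑(swap p q)) f = f) : dd p q (f * g) = f * dd p q g := by
  apply dd_unique h
  rw [map_mul, hf]
  linear_combination f * dd_spec p q g

theorem dd_C {p q : Fin N} (h : p ≠ q) (a : ℤ) : dd p q (C a) = 0 := by
  apply dd_unique h; simp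

theorem dd_zero {p q : Fin N} (h : p ≠ q) : dd p q (0 : MvPolynomial (Fin N) ℤ) = 0 := by
  apply dd_unique h; simp

theorem rename_swap_swap (p q : Fin N) (f : MvPolynomial (Fin N) ℤ) :
    rename (⇑(swap p q)) (rename (⇑(swap p q)) f) = f := by
  rw [rename_rename]
  have : (⇑(swap p q) ∘ ⇑(swap p q)) = id := by ext x; simp
  rw [this]; simp

theorem rename_dd {p q : Fin N} (h : p ≠ q) (f : MvPolynomial (Fin N) ℤ) :
    rename (⇑(swap p q)) (dd p q f) = dd p q f := by
  symm
  apply dd_unique h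
  have := congrArg (rename (⇑(swap p q))) (dd_spec p q f)
  simp only [map_mul, map_sub, rename_X, swap_apply_left, swap_apply_right,
    rename_swap_swap] at this
  linear_combination -this

theorem dd_dd {p q : Fin N} (h : p ≠ q) (f : MvPolynomial (Fin N) ℤ) :
    dd p q (dd p q f) = 0 := by
  apply dd_unique h
  rw [rename_dd h]; simp

theorem dd_comm {p q r s : Fin N} (h : p ≠ q) (h' : r ≠ s) (h1 : p ≠ r) (h2 : p ≠ s) (h3 : q ≠ r)
    (h4 : q ≠ s) (f : MvPolynomial (Fin N) ℤ) :
    dd p q (dd r s f) = dd r s (dd p q f) := by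
  apply dd_unique h
  apply mul_left_cancel₀ (X_sub_ne h')
  have e1 := dd_spec r s (dd p q f)
  have e2 := dd_spec p q f
  have e3 := dd_spec r s f
  have e4 := congrArg (rename (⇑(swap r s))) e2
  have e5 := congrArg (rename (⇑(swap p q))) e3
  simp only [map_mul, map_sub, rename_X, swap_apply_of_ne_of_ne h1 h2,
    swap_apply_of_ne_of_ne h3 h4, swap_apply_of_ne_of_ne h1.symm h3.symm,
    swap_apply_of_ne_of_ne h2.symm h4.symm, rename_rename] at e4 e5
  have e6 : (⇑(swap r s) ∘ ⇑(swap p q)) = (⇑(swap p q) ∘ ⇑(swap r s)) := by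
    ext x; simp only [Function.comp, swap_apply_def]; grind
  rw [e6] at e4
  linear_combination (X p - X q) * e1 + e2 - e4 - e3 + e5

theorem dd_braid {p q r : Fin N} (h1 : p ≠ q) (h2 : q ≠ r) (h3 : p ≠ r)
    (f : MvPolynomial (Fin N) ℤ) :
    dd p q (dd q r (dd p q f)) = dd q r (dd p q (dd q r f)) := by
  have hne : ((X p - X q) * (X p - X r) * (X q - X r) : MvPolynomial (Fin N) ℤ) ≠ 0 :=
    mul_ne_zero (mul_ne_zero (X_sub_ne h1) (X_sub_ne h3)) (X_sub_ne h2)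
  apply mul_left_cancel₀ hne
  have a1 := dd_spec p q f
  have a2 := dd_spec q r (dd p q f)
  have a3 := dd_spec p q (dd q r (dd p q f))
  have a4 := congrArg (rename (⇑(swap q r))) a1
  have a5 := congrArg (rename (⇑(swap p q))) a2
  have a6 := congrArg (rename (⇑(swap p q))) a4
  have b1 := dd_spec q r f
  have b2 := dd_spec p q (dd q r f)
  have b3 := dd_spec q r (dd p q (dd q r f))
  have b4 := congrArg (rename (⇑(swap p q))) b1
  have b5 := congrArg (rename (⇑(swap q r))) b2
  have b6 := congrArg (rename (⇑(swap q r))) b4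
  simp only [map_mul, map_sub, rename_X, swap_apply_left, swap_apply_right, rename_dd h1,
    rename_dd h2, swap_apply_of_ne_of_ne h1 h3, swap_apply_of_ne_of_ne h3.symm h2.symm]
    at a4 a5 a6 b4 b5 b6
  have e : rename (⇑(swap p q)) (rename (⇑(swap q r)) (rename (⇑(swap p q)) f)) =
      rename (⇑(swap q r)) (rename (⇑(swap p q)) (rename (⇑(swap q r)) f)) := by
    simp only [rename_rename]
    congr 2
    ext x; simp only [Function.comp, swap_apply_def]; grind
  rw [e] at a6
  linear_combination (X p - X r) * (X q - X r) * a3 + (X p - X r) * a2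
    - (X q - X r) * a5 + a1 - a4 + a6
    - ((X p - X q) * (X p - X r) * b3 + (X p - X r) * b2 - (X p - X q) * b5 + b1 - b4 + b6)

end

section
variable {N : ℕ} [NeZero N]

theorem pos_succ (p : Fin N) : pos N (p.val + 1) = p := by
  ext; simp [pos, Nat.mod_eq_of_lt p.isLt]

theorem pos_val {j : ℕ} (h1 : 1 ≤ j) (h2 : j ≤ N) : (pos N j).val + 1 = j := by
  simp only [pos]
  rw [Nat.mod_eq_of_lt (by omega)]; omega

theorem divDiff_eq (i : ℕ) (f : MvPolynomial (Fin N) ℤ) :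
    divDiff i f = dd (pos N i) (pos N (i + 1)) f := rfl

/-- the descent search -/
theorem find_none {u : Perm (Fin N)}
    (h : ((List.range (N - 1)).map (· + 1)).find? (fun i => decide (val u (i + 1) < val u i)) = none) :
    u = 1 := by
  by_contra hu
  obtain ⟨p, q, hpq, hd⟩ := exists_descent u hu
  rw [List.find?_eq_none] at h
  have := h (p.val + 1) (by
    simp only [List.mem_map, List.mem_range]
    exact ⟨p.val, by have := q.isLt; omega, rfl⟩)
  replace this := fun e => this (decide_eq_true e)
  simp only [val] at this
  rw [pos_succ p, hpq, pos_succ q] at this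
  rw [Fin.lt_def] at hd
  exact this (by omega)

theorem find_some {u : Perm (Fin N)} {i : ℕ}
    (h : ((List.range (N - 1)).map (· + 1)).find? (fun i => decide (val u (i + 1) < val u i)) = some i) :
    (pos N i).val + 1 = (pos N (i + 1)).val ∧ u (pos N (i + 1)) < u (pos N i) := by
  have h1 := List.find?_some h
  have h2 := List.mem_of_find?_eq_some h
  simp only [List.mem_map, List.mem_range] at h2
  obtain ⟨j, hj, rfl⟩ := h2
  replace h1 := of_decide_eq_true h1
  simp only [val] at h1
  constructor
  · have a1 := pos_val (N := N) (j := j + 1) (by omega) (by omega)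
    have a2 := pos_val (N := N) (j := j + 1 + 1) (by omega) (by omega)
    omega
  · rw [Fin.lt_def]; omega

theorem redWordAux_fuel (f f' : ℕ) (u : Perm (Fin N)) (h : len u ≤ f) (h' : len u ≤ f') :
    redWordAux N f u = redWordAux N f' u := by
  induction f generalizing f' u with
  | zero =>
    have : u = 1 := len_eq_zero (by omega)
    subst this
    cases f' with
    | zero => rfl
    | succ f' =>
      simp only [redWordAux]
      split
      · rfl
      · rename_i i hi
        have := (find_some hi)
        have h3 := this.2
        simp only [Perm.one_apply, Fin.lt_def] at h3
        omega
  | succ f ih =>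
    cases f' with
    | zero =>
      have : u = 1 := len_eq_zero (by omega)
      subst this
      simp only [redWordAux]
      split
      · rfl
      · rename_i i hi
        have := (find_some hi)
        have h3 := this.2
        simp only [Perm.one_apply, Fin.lt_def] at h3
        omega
    | succ f' =>
      simp only [redWordAux]
      split
      · rfl
      · rename_i i hi
        obtain ⟨h1, h2⟩ := find_some hi
        have h3 := len_adj u h1 h2
        rw [ih f' (u * t N i (i + 1)) (by unfold t; omega) (by unfold t; omega)]

/-- the operator attached to a permutation -/
noncomputable def D (u : Perm (Fin N)) (f : MvPolynomial (Fin N) ℤ) : MvPolynomial (Fin N) ℤ :=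
  divDiffWord (redWord N u) f

theorem D_one (f : MvPolynomial (Fin N) ℤ) : D 1 f = f := by
  unfold D redWord
  rw [redWordAux_fuel _ 0 _ (len_le _) (by rw [len_one])]
  rfl

theorem D_step0 (u : Perm (Fin N)) (hu : u ≠ 1) :
    ∃ p q : Fin N, p.val + 1 = q.val ∧ u q < u p ∧ ∀ f, D u f = D (u * swap p q) (dd p q f) := by
  have hpos : len u ≠ 0 := fun h => hu (len_eq_zero h)
  obtain ⟨L, hL⟩ := Nat.exists_eq_succ_of_ne_zero hpos
  have e : redWord N u = redWordAux N (L + 1) u :=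
    redWordAux_fuel _ _ _ (len_le _) (by omega)
  unfold D
  rw [e, redWordAux]
  split
  · rename_i h
    exact absurd (find_none h) hu
  · rename_i i hi
    obtain ⟨h1, h2⟩ := find_some hi
    have h3 := len_adj u h1 h2
    refine ⟨_, _, h1, h2, fun f => ?_⟩
    rw [redWordAux_fuel L (N * N) _ (by unfold t; omega) (len_le _)]
    unfold divDiffWord
    rw [List.foldr_append]
    rfl

theorem adj_ne {p q : Fin N} (h : p.val + 1 = q.val) : p ≠ q := by
  rintro rfl; omega

theorem D_step (u : Perm (Fin N)) {p q : Fin N} (hpq : p.val + 1 = q.val) (hd : u q < u p)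
    (f : MvPolynomial (Fin N) ℤ) : D u f = D (u * swap p q) (dd p q f) := by
  induction h : len u using Nat.strong_induction_on generalizing u p q f with
  | _ L ih =>
  have hu : u ≠ 1 := by
    rintro rfl
    simp only [Perm.one_apply, Fin.lt_def] at hd
    omega
  obtain ⟨r, s, hrs, hd', H⟩ := D_step0 u hu
  rw [H]
  have l1 := len_adj u hpq hd
  have l2 := len_adj u hrs hd'
  rcases lt_trichotomy r.val p.val with c | c | c
  · by_cases c2 : s = p
    · -- r, s = p, q
      subst c2
      have n1 := adj_ne hrs
      have n2 := adj_ne hpq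
      have n3 : r ≠ q := by rintro rfl; omega
      -- u r > u s > u q
      have a1 : (u * swap r s) q < (u * swap r s) s := by
        simp [swap_apply_of_ne_of_ne n3.symm n2.symm]; exact hd.trans hd'
      have m1 := len_adj _ hpq a1
      have a2 : (u * swap r s * swap s q) s < (u * swap r s * swap s q) r := by
        simp [swap_apply_of_ne_of_ne n1 n3, swap_apply_of_ne_of_ne n3.symm n2.symm]; exact hd
      have b1 : (u * swap s q) s < (u * swap s q) r := by
        simp [swap_apply_of_ne_of_ne n1 n3]; exact hd.trans hd'
      have m2 := len_adj _ hrs b1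
      have b2 : (u * swap s q * swap r s) q < (u * swap s q * swap r s) s := by
        simp [swap_apply_of_ne_of_ne n1 n3, swap_apply_of_ne_of_ne n3.symm n2.symm]; exact hd'
      rw [ih _ (by omega) (u * swap r s) hpq a1 _ rfl,
        ih _ (by omega) (u * swap r s * swap s q) hrs a2 _ rfl,
        ih _ (by omega) (u * swap s q) hrs b1 _ rfl,
        ih _ (by omega) (u * swap s q * swap r s) hpq b2 _ rfl, dd_braid n1 n2 n3]
      congr 1
      simp only [mul_assoc]
      congr 1
      ext x; simp only [Perm.mul_apply, swap_apply_def]; grind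
    · have c3 : s.val ≠ p.val := fun e => c2 (Fin.ext e)
      have n1 : r ≠ p := by rintro rfl; omega
      have n2 : r ≠ q := by rintro rfl; omega
      have n3 : s ≠ p := c2
      have n4 : s ≠ q := by rintro rfl; omega
      have a1 : (u * swap r s) q < (u * swap r s) p := by
        simp [swap_apply_of_ne_of_ne n1.symm n3.symm, swap_apply_of_ne_of_ne n2.symm n4.symm, hd]
      have b1 : (u * swap p q) s < (u * swap p q) r := by
        simp [swap_apply_of_ne_of_ne n1 n2, swap_apply_of_ne_of_ne n3 n4, hd']
      rw [ih _ (by omega) (u * swap r s) hpq a1 _ rfl, ih _ (by omega) (u * swap p q) hrs b1 _ rfl,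
        dd_comm (adj_ne hpq) (adj_ne hrs) n1.symm n3.symm n2.symm n4.symm]
      congr 1
      simp only [mul_assoc]
      congr 1
      ext x; simp only [Perm.mul_apply, swap_apply_def]; grind
  · have e1 : r = p := Fin.ext c
    have e2 : s = q := Fin.ext (by omega)
    rw [e1, e2]
  · by_cases c2 : q = r
    · subst c2
      have n1 := adj_ne hpq
      have n2 := adj_ne hrs
      have n3 : p ≠ s := by rintro rfl; omega
      -- u p > u q > u s
      have a1 : (u * swap p q) s < (u * swap p q) q := by
        simp [swap_apply_of_ne_of_ne n3.symm n2.symm]; exact hd'.trans hd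
      have m1 := len_adj _ hrs a1
      have a2 : (u * swap p q * swap q s) q < (u * swap p q * swap q s) p := by
        simp [swap_apply_of_ne_of_ne n1 n3, swap_apply_of_ne_of_ne n3.symm n2.symm]; exact hd'
      have b1 : (u * swap q s) q < (u * swap q s) p := by
        simp [swap_apply_of_ne_of_ne n1 n3]; exact hd'.trans hd
      have m2 := len_adj _ hpq b1
      have b2 : (u * swap q s * swap p q) s < (u * swap q s * swap p q) q := by
        simp [swap_apply_of_ne_of_ne n1 n3, swap_apply_of_ne_of_ne n3.symm n2.symm]; exact hd
      rw [ih _ (by omega) (u * swap p q) hrs a1 _ rfl,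
        ih _ (by omega) (u * swap p q * swap q s) hpq a2 _ rfl,
        ih _ (by omega) (u * swap q s) hpq b1 _ rfl,
        ih _ (by omega) (u * swap q s * swap p q) hrs b2 _ rfl, dd_braid n1 n2 n3]
      congr 1
      simp only [mul_assoc]
      congr 1
      ext x; simp only [Perm.mul_apply, swap_apply_def]; grind
    · have c3 : q.val ≠ r.val := fun e => c2 (Fin.ext e)
      have n1 : r ≠ p := by rintro rfl; omega
      have n2 : r ≠ q := fun e => c2 e.symm
      have n3 : s ≠ p := by rintro rfl; omega
      have n4 : s ≠ q := by rintro rfl; omega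
      have a1 : (u * swap r s) q < (u * swap r s) p := by
        simp [swap_apply_of_ne_of_ne n1.symm n3.symm, swap_apply_of_ne_of_ne n2.symm n4.symm, hd]
      have b1 : (u * swap p q) s < (u * swap p q) r := by
        simp [swap_apply_of_ne_of_ne n1 n2, swap_apply_of_ne_of_ne n3 n4, hd']
      rw [ih _ (by omega) (u * swap r s) hpq a1 _ rfl, ih _ (by omega) (u * swap p q) hrs b1 _ rfl,
        dd_comm (adj_ne hpq) (adj_ne hrs) n1.symm n3.symm n2.symm n4.symm]
      congr 1
      simp only [mul_assoc]
      congr 1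
      ext x; simp only [Perm.mul_apply, swap_apply_def]; grind

theorem D_zero (u : Perm (Fin N)) : D u (0 : MvPolynomial (Fin N) ℤ) = 0 := by
  induction h : len u using Nat.strong_induction_on generalizing u with
  | _ L ih =>
    by_cases hu : u = 1
    · subst hu; exact D_one 0
    · obtain ⟨p, q, hpq, hd⟩ := exists_descent u hu
      have := len_adj u hpq hd
      rw [D_step u hpq hd, dd_zero (adj_ne hpq), ih _ (by omega) _ rfl]

theorem D_add (u : Perm (Fin N)) (f g : MvPolynomial (Fin N) ℤ) : D u (f + g) = D u f + D u g := by
  induction h : len u using Nat.strong_induction_on generalizing u f g with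
  | _ L ih =>
    by_cases hu : u = 1
    · subst hu; simp only [D_one]
    · obtain ⟨p, q, hpq, hd⟩ := exists_descent u hu
      have := len_adj u hpq hd
      simp only [D_step u hpq hd]
      rw [dd_add (adj_ne hpq), ih _ (by omega) _ _ _ rfl]

theorem D_symm_mul (u : Perm (Fin N)) (f g : MvPolynomial (Fin N) ℤ) (hf : f.IsSymmetric) :
    D u (f * g) = f * D u g := by
  induction h : len u using Nat.strong_induction_on generalizing u g with
  | _ L ih =>
    by_cases hu : u = 1
    · subst hu; simp only [D_one]
    · obtain ⟨p, q, hpq, hd⟩ := exists_descent u hu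
      have := len_adj u hpq hd
      simp only [D_step u hpq hd]
      rw [dd_symm_mul (adj_ne hpq) _ _ (hf _), ih _ (by omega) _ _ rfl]

/-- `D_u ∂_i` -/
theorem D_dd (u : Perm (Fin N)) {p q : Fin N} (hpq : p.val + 1 = q.val)
    (f : MvPolynomial (Fin N) ℤ) :
    D u (dd p q f) = if u p < u q then D (u * swap p q) f else 0 := by
  split_ifs with h
  · rw [D_step (u * swap p q) hpq (by simpa using h)]
    simp [mul_assoc]
  · have h' : u q < u p := lt_of_le_of_ne (not_lt.mp h)
      (fun e => adj_ne hpq (u.injective e.symm))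
    rw [D_step u hpq h', dd_dd (adj_ne hpq), D_zero]

theorem D_D (u v : Perm (Fin N)) (f : MvPolynomial (Fin N) ℤ) :
    D u (D v f) = if len (u * v) = len u + len v then D (u * v) f else 0 := by
  induction h : len v using Nat.strong_induction_on generalizing v f with
  | _ L ih =>
    by_cases hv : v = 1
    · subst hv; subst h; simp only [D_one, mul_one, len_one]; simp
    · obtain ⟨p, q, hpq, hd⟩ := exists_descent v hv
      have h1 := len_adj v hpq hd
      have h2 := len_mul_le u (v * swap p q)
      rw [D_step v hpq hd, ih _ (by omega) _ _ rfl, D_dd _ hpq, ← mul_assoc, mul_assoc (u * v),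
        swap_mul_self, mul_one]
      rw [← mul_assoc] at h2
      have e1 : (u * v * swap p q) p = (u * v) q := by simp
      have e2 : (u * v * swap p q) q = (u * v) p := by simp
      rw [e1, e2]
      rcases adj_cases (u * v) hpq with h3 | h3
      · rw [if_neg (not_lt.mpr h3.1.le)]
        simp only [ite_self]
        rw [if_neg (by omega)]
      · rw [if_pos h3.1]
        congr 1
        rw [eq_iff_iff]; omega

end

section
variable {N : ℕ} [NeZero N]

/-- the dual functionals -/
noncomputable def phi (u : Perm (Fin N)) (f : MvPolynomial (Fin N) ℤ) : ℤ := constantCoeff (D u f)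

theorem phi_add (u : Perm (Fin N)) (f g : MvPolynomial (Fin N) ℤ) :
    phi u (f + g) = phi u f + phi u g := by
  unfold phi; rw [D_add, map_add]

theorem phi_zero (u : Perm (Fin N)) : phi u (0 : MvPolynomial (Fin N) ℤ) = 0 := by
  unfold phi; rw [D_zero, map_zero]

/-- additive hom version -/
noncomputable def phiHom (u : Perm (Fin N)) : MvPolynomial (Fin N) ℤ →+ ℤ where
  toFun := phi u
  map_zero' := phi_zero u
  map_add' := phi_add u

theorem phi_neg (u : Perm (Fin N)) (f : MvPolynomial (Fin N) ℤ) : phi u (-f) = - phi u f :=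
  (phiHom u).map_neg f

theorem phi_sub (u : Perm (Fin N)) (f g : MvPolynomial (Fin N) ℤ) :
    phi u (f - g) = phi u f - phi u g :=
  (phiHom u).map_sub f g

/-- sign -/
def sg (k b : Fin N) : ℤ := if k < b then 1 else -1

theorem dd_X {p q : Fin N} (h : p ≠ q) (k : Fin N) :
    dd p q (X k : MvPolynomial (Fin N) ℤ) = if k = p then 1 else if k = q then -1 else 0 := by
  apply dd_unique h
  rw [rename_X]
  split_ifs with h1 h2
  · subst h1; simp
  · subst h2; simp
  · rw [swap_apply_of_ne_of_ne h1 h2]; simp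

theorem phi_dd (u : Perm (Fin N)) {p q : Fin N} (hpq : p.val + 1 = q.val)
    (f : MvPolynomial (Fin N) ℤ) :
    phi u (dd p q f) = if u p < u q then phi (u * swap p q) f else 0 := by
  unfold phi
  rw [D_dd u hpq]
  split_ifs <;> simp

theorem swap_mono {i i1 x y : Fin N} (hi : i.val + 1 = i1.val) (h : x < y)
    (hne : ¬ (x = i ∧ y = i1)) : swap i i1 x < swap i i1 y := by
  simp only [Fin.lt_def, swap_apply_def, Fin.ext_iff] at *
  split_ifs <;> omega

theorem swap_conj (s : Perm (Fin N)) (k b : Fin N) (hs : s * s = 1) :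
    swap (s k) (s b) = s * swap k b * s := by
  have : s⁻¹ = s := inv_eq_of_mul_eq_one_left hs
  have h := Equiv.swap_apply_apply s k b
  rw [this] at h
  exact h

theorem monk_key (u : Perm (Fin N)) {i i1 k b : Fin N} (hi : i.val + 1 = i1.val)
    (hd : u i1 < u i) (hkb : k < b) (hne : ¬ (k = i ∧ b = i1)) :
    (len (u * swap k b * swap i i1) + 1 = len (u * swap i i1) ∧
      (u * swap k b) i1 < (u * swap k b) i) ↔ len (u * swap k b) + 1 = len u := by
  have h1 := len_adj u hi hd
  rcases adj_cases (u * swap k b) hi with h2 | h2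
  · constructor
    · rintro ⟨h3, h4⟩
      exact absurd h4 (not_lt.mpr h2.1.le)
    · intro h3
      exfalso
      have h4 := (len_down_iff u hkb).mp (by omega)
      have h5 := swap_mono hi hkb hne
      have h6 := (len_down_iff (u * swap i i1) h5).mpr (by simpa using h4)
      rw [swap_conj _ _ _ (swap_mul_self i i1)] at h6
      have e : u * swap i i1 * (swap i i1 * swap k b * swap i i1) = u * swap k b * swap i i1 := by
        rw [mul_assoc u, ← mul_assoc (swap i i1) (swap i i1 * _), ← mul_assoc (swap i i1) (swap i i1),
          swap_mul_self, one_mul, mul_assoc]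
      rw [e] at h6
      omega
  · constructor
    · rintro ⟨h3, h4⟩
      omega
    · intro h3
      exact ⟨by omega, h2.1⟩

theorem monk_term (u : Perm (Fin N)) {i i1 : Fin N} (k b : Fin N) (hi : i.val + 1 = i1.val)
    (hd : u i1 < u i) (f : MvPolynomial (Fin N) ℤ) :
    (if len (u * swap i i1 * swap (swap i i1 k) (swap i i1 b)) + 1 = len (u * swap i i1) then
        sg (swap i i1 k) (swap i i1 b) *
          phi (u * swap i i1 * swap (swap i i1 k) (swap i i1 b)) (dd i i1 f) else 0)
      + (if (k = i ∧ b = i1) ∨ (k = i1 ∧ b = i) then sg k b * phi (u * swap i i1) f else 0)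
    = if len (u * swap k b) + 1 = len u then sg k b * phi (u * swap k b) f else 0 := by
  have e : u * swap i i1 * swap (swap i i1 k) (swap i i1 b) = u * swap k b * swap i i1 := by
    rw [swap_conj _ _ _ (swap_mul_self i i1),
      mul_assoc u, ← mul_assoc (swap i i1) (swap i i1 * _), ← mul_assoc (swap i i1) (swap i i1),
          swap_mul_self, one_mul, mul_assoc]
  rw [e]
  have h1 := len_adj u hi hd
  have hne := adj_ne hi
  by_cases hc : (k = i ∧ b = i1) ∨ (k = i1 ∧ b = i)
  · rw [if_pos hc]
    have e2 : swap k b = swap i i1 := by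
      rcases hc with ⟨rfl, rfl⟩ | ⟨rfl, rfl⟩
      · rfl
      · exact swap_comm _ _
    rw [e2, mul_assoc u, swap_mul_self, mul_one, if_neg (by omega), if_pos h1, zero_add]
  · rw [if_neg hc, add_zero]
    by_cases hkb : k = b
    · subst hkb
      rw [swap_self]
      have : (Equiv.refl (Fin N)) = (1 : Perm (Fin N)) := rfl
      rw [this, mul_one, if_neg (by omega), if_neg (by omega)]
    · have hsg : sg (swap i i1 k) (swap i i1 b) = sg k b := by
        unfold sg
        rcases lt_or_gt_of_ne hkb with h | h
        · rw [if_pos h, if_pos (swap_mono hi h (fun h' => hc (Or.inl h')))]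
        · rw [if_neg (not_lt.mpr h.le), if_neg (not_lt.mpr
            (swap_mono hi h (fun h' => hc (Or.inr ⟨h'.2, h'.1⟩))).le)]
      rw [hsg, phi_dd _ hi]
      have key : (len (u * swap k b * swap i i1) + 1 = len (u * swap i i1) ∧
        (u * swap k b) i1 < (u * swap k b) i) ↔ len (u * swap k b) + 1 = len u := by
        rcases lt_or_gt_of_ne hkb with h | h
        · exact monk_key u hi hd h (fun h' => hc (Or.inl h'))
        · rw [swap_comm k b]
          exact monk_key u hi hd h (fun h' => hc (Or.inr ⟨h'.2, h'.1⟩))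
      have e1 : (u * swap k b * swap i i1) i = (u * swap k b) i1 := by simp
      have e2 : (u * swap k b * swap i i1) i1 = (u * swap k b) i := by simp
      rw [e1, e2, mul_assoc (u * swap k b), swap_mul_self, mul_one]
      by_cases h5 : len (u * swap k b) + 1 = len u
      · rw [if_pos h5, if_pos (key.mpr h5).1, if_pos (key.mpr h5).2]
      · rw [if_neg h5]
        split_ifs with h6 h7
        · exact absurd (key.mp ⟨h6, h7⟩) h5
        · simp
        · rfl

theorem monk (u : Perm (Fin N)) (k : Fin N) (f : MvPolynomial (Fin N) ℤ) :
    phi u (X k * f) = ∑ b, if len (u * swap k b) + 1 = len u then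
      sg k b * phi (u * swap k b) f else 0 := by
  induction h : len u using Nat.strong_induction_on generalizing u k f with
  | _ L ih =>
    subst h
    by_cases hu : u = 1
    · subst hu
      rw [Finset.sum_eq_zero]
      · unfold phi; rw [D_one]; simp
      · intro b _
        rw [if_neg (by rw [len_one]; omega)]
    · obtain ⟨i, i1, hi, hd⟩ := exists_descent u hu
      have h1 := len_adj u hi hd
      have hne := adj_ne hi
      have e0 : phi u (X k * f) = phi (u * swap i i1) (dd i i1 (X k * f)) := by
        unfold phi; rw [D_step u hi hd]
      rw [e0, dd_mul hne, phi_add, rename_X, ih _ (by omega) _ _ _ rfl]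
      rw [← Equiv.sum_comp (swap i i1)]
      rw [← Finset.sum_congr rfl (fun b _ => monk_term u k b hi hd f), Finset.sum_add_distrib,
        add_comm]
      congr 1
      rw [dd_X hne]
      by_cases c1 : k = i
      · subst c1
        rw [if_pos rfl, Finset.sum_eq_single i1]
        · rw [if_pos (Or.inl ⟨rfl, rfl⟩), one_mul]
          unfold sg
          rw [if_pos (by rw [Fin.lt_def]; omega), one_mul]
        · intro b _ hb
          rw [if_neg]
          rintro (h | h)
          · exact hb h.2
          · exact hne h.1
        · simp
      · rw [if_neg c1]
        by_cases c2 : k = i1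
        · subst c2
          rw [if_pos rfl, Finset.sum_eq_single i]
          · rw [if_pos (Or.inr ⟨rfl, rfl⟩)]
            unfold sg
            rw [if_neg (by rw [Fin.lt_def]; omega), neg_one_mul, neg_one_mul, phi_neg]
          · intro b _ hb
            rw [if_neg]
            rintro (h | h)
            · exact hne h.1.symm
            · exact hb h.2
          · simp
        · rw [if_neg c2, zero_mul, phi_zero, Finset.sum_eq_zero]
          intro b _
          rw [if_neg]
          rintro (h | h)
          · exact c1 h.1
          · exact c2 h.1

theorem phi_C (u : Perm (Fin N)) (a : ℤ) : phi u (C a) = if u = 1 then a else 0 := by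
  split_ifs with hu
  · subst hu; unfold phi; rw [D_one]; simp
  · obtain ⟨i, i1, hi, hd⟩ := exists_descent u hu
    unfold phi
    rw [D_step u hi hd, dd_C (adj_ne hi), D_zero, map_zero]

theorem phi_sym (u : Perm (Fin N)) (f : MvPolynomial (Fin N) ℤ) (hf : f ∈ symIdeal N) :
    phi u f = 0 := by
  unfold symIdeal at hf
  induction hf using Submodule.span_induction generalizing u with
  | mem x hx =>
    have := D_symm_mul u x 1 hx.1
    unfold phi
    rw [mul_one] at this
    rw [this, map_mul, hx.2, zero_mul]
  | zero => exact phi_zero u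
  | add x y _ _ h1 h2 => rw [phi_add, h1, h2, add_zero]
  | smul a x _ h =>
    rw [smul_eq_mul]
    induction a using MvPolynomial.induction_on generalizing u with
    | C a =>
      have e : phi u (C a * x) = a * phi u x := by
        unfold phi
        rw [D_symm_mul u _ _ (MvPolynomial.IsSymmetric.C a)]
        simp
      rw [e, h, mul_zero]
    | add p q hp hq => rw [add_mul, phi_add, hp, hq, add_zero]
    | mul_X p i hp =>
      rw [mul_comm p, mul_assoc, monk]
      apply Finset.sum_eq_zero
      intro b _
      rw [hp]; simp

/-- homogeneity -/
theorem phi_X_homog (d : ℕ) (f : MvPolynomial (Fin N) ℤ) (h : ∀ u, len u ≠ d → phi u f = 0)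
    (i : Fin N) : ∀ u, len u ≠ d + 1 → phi u (X i * f) = 0 := by
  intro u hu
  rw [monk]
  apply Finset.sum_eq_zero
  intro b _
  split_ifs with h1
  · rw [h _ (by omega), mul_zero]
  · rfl

theorem phi_pow_homog (d e : ℕ) (f : MvPolynomial (Fin N) ℤ) (h : ∀ u, len u ≠ d → phi u f = 0)
    (i : Fin N) : ∀ u, len u ≠ d + e → phi u (X i ^ e * f) = 0 := by
  induction e with
  | zero => simpa using h
  | succ e ih =>
    have := phi_X_homog (d + e) _ ih i
    rw [pow_succ']
    simpa [mul_assoc, add_assoc] using this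

theorem phi_mon_homog (c : Fin N → ℕ) (S : Finset (Fin N)) :
    ∃ d, ∀ u : Perm (Fin N), len u ≠ d → phi u (∏ i ∈ S, (X i : MvPolynomial (Fin N) ℤ) ^ c i) = 0 := by
  induction S using Finset.induction_on with
  | empty =>
    refine ⟨0, fun u hu => ?_⟩
    rw [Finset.prod_empty, ← C_1, phi_C, if_neg]
    rintro rfl
    exact hu len_one
  | insert a S ha ih =>
    obtain ⟨d, hd⟩ := ih
    refine ⟨d + c a, ?_⟩
    rw [Finset.prod_insert ha]
    exact phi_pow_homog d (c a) _ hd a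

end

section
variable {N : ℕ} [NeZero N]

/-- Lehmer code -/
def code (v : Perm (Fin N)) (i : Fin N) : ℕ :=
  (Finset.univ.filter fun j : Fin N => i < j ∧ v j < v i).card

theorem code_desc (v : Perm (Fin N)) {p q : Fin N} (hpq : p.val + 1 = q.val) (hd : v q < v p) :
    code v q < code v p := by
  unfold code
  apply Finset.card_lt_card
  rw [Finset.ssubset_iff]
  refine ⟨q, by simp, ?_⟩
  intro j hj
  rw [Finset.mem_insert, Finset.mem_filter] at hj
  rw [Finset.mem_filter]
  refine ⟨Finset.mem_univ _, ?_⟩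
  simp only [Fin.lt_def] at *
  rcases hj with rfl | ⟨_, h1, h2⟩
  · omega
  · omega

theorem code_desc_conv (v : Perm (Fin N)) {p q : Fin N} (hpq : p.val + 1 = q.val)
    (hd : v p < v q) : code v p ≤ code v q := by
  unfold code
  apply Finset.card_le_card
  intro j hj
  rw [Finset.mem_filter] at *
  refine ⟨Finset.mem_univ _, ?_⟩
  obtain ⟨_, h1, h2⟩ := hj
  have hne : j ≠ q := by
    rintro rfl
    exact absurd h2 (not_lt.mpr hd.le)
  have : j.val ≠ q.val := fun e => hne (Fin.ext e)
  simp only [Fin.lt_def] at *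
  omega

theorem code_swap_left (v : Perm (Fin N)) {p q : Fin N} (hpq : p.val + 1 = q.val) (hd : v q < v p) :
    code (v * swap p q) p = code v q := by
  unfold code
  congr 1
  ext j
  rw [Finset.mem_filter, Finset.mem_filter]
  simp only [Finset.mem_univ, true_and, Perm.mul_apply, swap_apply_left]
  by_cases h1 : j = p
  · subst h1; simp only [swap_apply_left, Fin.lt_def]; omega
  · by_cases h2 : j = q
    · subst h2; simp; intro _; exact hd.le
    · rw [swap_apply_of_ne_of_ne h1 h2]
      have : j.val ≠ q.val := fun e => h2 (Fin.ext e)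
      simp only [Fin.lt_def] at *
      omega

theorem code_swap_right (v : Perm (Fin N)) {p q : Fin N} (hpq : p.val + 1 = q.val) (hd : v q < v p) :
    code (v * swap p q) q + 1 = code v p := by
  have hnp : q ∉ (Finset.univ.filter fun j : Fin N =>
      q < j ∧ (v * swap p q) j < (v * swap p q) q) := by simp
  unfold code
  rw [← Finset.card_insert_of_notMem hnp]
  congr 1
  ext j
  rw [Finset.mem_insert, Finset.mem_filter, Finset.mem_filter]
  simp only [Finset.mem_univ, true_and, Perm.mul_apply, swap_apply_right]
  by_cases h1 : j = p
  · subst h1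
    have := adj_ne hpq
    simp only [this, Fin.lt_def, false_or]; omega
  · by_cases h2 : j = q
    · subst h2; simp only [true_or, true_iff]; exact ⟨by rw [Fin.lt_def]; omega, hd⟩
    · rw [swap_apply_of_ne_of_ne h1 h2]
      have : j.val ≠ q.val := fun e => h2 (Fin.ext e)
      simp only [Fin.lt_def, h2, false_or] at *
      omega

theorem code_swap_other (v : Perm (Fin N)) {p q x : Fin N} (hpq : p.val + 1 = q.val)
    (h1 : x ≠ p) (h2 : x ≠ q) : code (v * swap p q) x = code v x := by
  unfold code
  apply Finset.card_bij (fun j _ => swap p q j)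
  · intro j hj
    rw [Finset.mem_filter] at *
    simp only [Finset.mem_univ, true_and, Perm.mul_apply, swap_apply_of_ne_of_ne h1 h2] at *
    refine ⟨?_, hj.2⟩
    have := swap_mono hpq hj.1 (fun h => h1 h.1)
    rwa [swap_apply_of_ne_of_ne h1 h2] at this
  · intro a _ b _ h
    exact (swap p q).injective h
  · intro j hj
    refine ⟨swap p q j, ?_, by simp⟩
    rw [Finset.mem_filter] at *
    simp only [Finset.mem_univ, true_and, Perm.mul_apply, swap_apply_of_ne_of_ne h1 h2,
      swap_apply_self] at *
    refine ⟨?_, hj.2⟩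
    have := swap_mono hpq hj.1 (fun h => h1 h.1)
    rwa [swap_apply_of_ne_of_ne h1 h2] at this

theorem D_code (v : Perm (Fin N))
    (h : ∀ p q : Fin N, p.val + 1 = q.val → code v q ≤ code v p ∧ code v p ≤ code v q + 1) :
    D v (∏ i, (X i : MvPolynomial (Fin N) ℤ) ^ code v i) = 1 := by
  induction hL : len v using Nat.strong_induction_on generalizing v with
  | _ L ih =>
    by_cases hv : v = 1
    · subst hv
      rw [D_one]
      apply Finset.prod_eq_one
      intro i _
      have : code (1 : Perm (Fin N)) i = 0 := by
        unfold code
        rw [Finset.card_eq_zero, Finset.filter_eq_empty_iff]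
        rintro j _ ⟨h1, h2⟩
        exact absurd h1 (not_lt.mpr (by simpa using h2.le))
      rw [this, pow_zero]
    · have hex : ∃ n, ∃ p q : Fin N, p.val = n ∧ p.val + 1 = q.val ∧ v q < v p := by
        obtain ⟨p, q, h1, h2⟩ := exists_descent v hv
        exact ⟨_, p, q, rfl, h1, h2⟩
      obtain ⟨p, q, hp, hpq, hd⟩ := Nat.find_spec hex
      have hmin : ∀ a b : Fin N, a.val + 1 = b.val → a.val < p.val → v a < v b := by
        intro a b hab hlt
        by_contra hcon
        have hd' : v b < v a := lt_of_le_of_ne (not_lt.mp hcon)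
          (fun e => adj_ne hab (v.injective e.symm))
        exact Nat.find_min hex (by omega) ⟨a, b, rfl, hab, hd'⟩
      have c1 := code_desc v hpq hd
      have c2 := h p q hpq
      have s1 := code_swap_left v hpq hd
      have s2 := code_swap_right v hpq hd
      have l1 := len_adj v hpq hd
      have hne := adj_ne hpq
      rw [D_step v hpq hd]
      have e1 : dd p q (∏ i, (X i : MvPolynomial (Fin N) ℤ) ^ code v i) =
          ∏ i, (X i : MvPolynomial (Fin N) ℤ) ^ code (v * swap p q) i := by
        have e2 : (∏ i, (X i : MvPolynomial (Fin N) ℤ) ^ code v i) =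
            (∏ i, (X i : MvPolynomial (Fin N) ℤ) ^ code (v * swap p q) i) * X p := by
          rw [← Finset.mul_prod_erase Finset.univ _ (Finset.mem_univ p),
            ← Finset.mul_prod_erase Finset.univ _ (Finset.mem_univ p)]
          have e3 : code v p = code (v * swap p q) p + 1 := by omega
          rw [e3, pow_succ, mul_assoc, mul_assoc]
          rw [mul_comm (X p)]
          congr 2
          apply Finset.prod_congr rfl
          intro x hx
          rw [Finset.mem_erase] at hx
          by_cases hxq : x = q
          · subst hxq; congr 1; omega
          · rw [code_swap_other v hpq hx.1 hxq]
        rw [e2, dd_symm_mul hne, dd_X hne, if_pos rfl, mul_one]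
        rw [map_prod, ← Equiv.prod_comp (swap p q)]
        apply Finset.prod_congr rfl
        intro x _
        rw [map_pow, rename_X, swap_apply_self]
        congr 1
        by_cases hxp : x = p
        · subst hxp; rw [swap_apply_left]; omega
        · by_cases hxq : x = q
          · subst hxq; rw [swap_apply_right]; omega
          · rw [swap_apply_of_ne_of_ne hxp hxq]
      rw [e1]
      apply ih _ (by omega) _ _ rfl
      intro a b hab
      have hab' := h a b hab
      by_cases ha : a = p
      · subst ha
        have : b = q := Fin.ext (by omega)
        subst this
        omega
      · have hbq : b ≠ q := by
          rintro rfl; exact ha (Fin.ext (by omega))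
        by_cases haq : a = q
        · subst haq
          have hbp : b ≠ p := by rintro rfl; omega
          rw [code_swap_other v hpq hbp hbq]
          omega
        · rw [code_swap_other v hpq ha haq]
          by_cases hbp : b = p
          · subst hbp
            have := code_desc_conv v hab (hmin a b hab (by omega))
            omega
          · rw [code_swap_other v hpq hbp hbq]
            exact hab'

theorem code_w0 (i : Fin N) : code (w0 N) i = N - 1 - i.val := by
  unfold code
  have : (Finset.univ.filter fun j : Fin N => i < j ∧ (w0 N) j < (w0 N) i) = Finset.Ioi i := by
    ext j
    rw [Finset.mem_filter]
    simp [w0]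
  rw [this, Fin.card_Ioi]

theorem D_staircase : D (w0 N) (staircase N) = 1 := by
  have := D_code (w0 N) (by
    intro p q hpq
    rw [code_w0, code_w0]
    omega)
  simp only [code_w0] at this
  exact this

theorem phi_staircase (v : Perm (Fin N)) : phi v (staircase N) = if v = w0 N then 1 else 0 := by
  split_ifs with h
  · subst h; unfold phi; rw [D_staircase]; simp
  · obtain ⟨d, hd⟩ := phi_mon_homog (N := N) (fun i => N - 1 - i.val) Finset.univ
    have h1 : len (w0 N) = d := by
      by_contra hne
      have := hd _ hne
      have h2 : phi (w0 N) (staircase N) = 1 := by unfold phi; rw [D_staircase]; simp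
      unfold staircase at h2
      omega
    apply hd
    intro h2
    exact h (eq_w0_of_len (h2.trans h1.symm))

theorem phi_schubert (u w : Perm (Fin N)) :
    phi u (schubertPoly N w) = if u = w then 1 else 0 := by
  have e : schubertPoly N w = D (w⁻¹ * w0 N) (staircase N) := rfl
  rw [e]
  unfold phi
  rw [D_D]
  have h1 := len_inv_w0 w
  by_cases h : u = w
  · subst h
    rw [if_pos rfl, mul_inv_cancel_left, if_pos h1.symm, D_staircase]; simp
  · rw [if_neg h]
    split_ifs with h2
    · have := phi_staircase (u * (w⁻¹ * w0 N))
      unfold phi at this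
      rw [this, if_neg]
      intro h3
      apply h
      rw [← mul_assoc] at h3
      exact mul_inv_eq_one.mp (mul_eq_right.mp h3)
    · simp

end

section
/-- sums of decreasing products -/
def Pop {E : Type*} [Ring E] (A : ℕ → E) : ℕ → ℕ → E
  | _, 0 => 1
  | 0, _ + 1 => 0
  | V + 1, m + 1 => Pop A V (m + 1) + A V * Pop A V m

theorem Pop_zero {E : Type*} [Ring E] (A : ℕ → E) (V : ℕ) : Pop A V 0 = 1 := by
  cases V <;> rfl

theorem Pop_R1 {E : Type*} [Ring E] (A A' : ℕ → E)
    (rel : ∀ v V, v < V → (A' V - A V) * A v = A' v * (A' V - A V)) (V : ℕ) (V' : ℕ) (hV : V' ≤ V)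
    (m : ℕ) : (A' V - A V) * Pop A V' m = Pop A' V' m * (A' V - A V) := by
  induction V' generalizing m with
  | zero =>
    cases m with
    | zero => simp [Pop_zero]
    | succ m => simp [Pop]
  | succ V' ih =>
    cases m with
    | zero => simp [Pop_zero]
    | succ m =>
      simp only [Pop]
      rw [mul_add, add_mul, ih (by omega), ← mul_assoc, rel V' V (by omega), mul_assoc,
        ih (by omega), mul_assoc]

theorem Pop_key {E : Type*} [Ring E] (A A' : ℕ → E)
    (rel : ∀ v V, v < V → (A' V - A V) * A v = A' v * (A' V - A V))
    (hz : ∀ V, A' V * (A' V - A V) = 0) (V m : ℕ) :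
    Pop A' V (m + 1) = Pop A V (m + 1) +
      Pop A' V m * ∑ v ∈ Finset.range V, (A' v - A v) := by
  induction V generalizing m with
  | zero => simp [Pop]
  | succ V ih =>
    rw [Finset.sum_range_succ]
    have r1 := Pop_R1 A A' rel V V le_rfl
    cases m with
    | zero =>
      have h0 := ih 0
      simp only [Pop, Pop_zero, one_mul, mul_one] at *
      rw [h0]; abel
    | succ m =>
      have r2 : A' V * Pop A' V m * (A' V - A V) = 0 := by
        rw [mul_assoc, ← r1, ← mul_assoc, hz, zero_mul]
      have h0 := ih m
      have h1 := ih (m + 1)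
      have r3 := r1 (m + 1)
      simp only [Pop] at *
      rw [mul_add, add_mul, add_mul _ _ (A' V - A V), r2, ← r3, h1]
      rw [sub_mul, mul_assoc (A' V), add_zero]
      have h2 : A' V * (Pop A' V (m + 1)) = A' V * Pop A V (m + 1) + A' V * (Pop A' V m *
        ∑ v ∈ Finset.range V, (A' v - A v)) := by rw [h0, mul_add]
      rw [h2]
      abel

variable {N : ℕ} [NeZero N]

/-- the down operator with label `V` -/
noncomputable def Aop (N k V : ℕ) : Module.End ℤ (Perm (Fin N) → ℤ) where
  toFun F u := ∑ p : Fin N, ∑ q : Fin N,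
    if (u p).val = V ∧ p.val < k ∧ k ≤ q.val ∧ len (u * swap p q) + 1 = len u
      then F (u * swap p q) else 0
  map_add' F G := by
    ext u
    simp only [Pi.add_apply, ← Finset.sum_add_distrib]
    refine Finset.sum_congr rfl fun p _ => Finset.sum_congr rfl fun q _ => ?_
    split_ifs <;> simp
  map_smul' c F := by
    ext u
    simp only [Pi.smul_apply, Finset.smul_sum, RingHom.id_apply]
    refine Finset.sum_congr rfl fun p _ => Finset.sum_congr rfl fun q _ => ?_
    split_ifs <;> simp

theorem Aop_apply (k : ℕ) (F : Perm (Fin N) → ℤ) (u : Perm (Fin N)) (P : Fin N) :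
    Aop N k (u P).val F u = ∑ q : Fin N,
      if P.val < k ∧ k ≤ q.val ∧ len (u * swap P q) + 1 = len u then F (u * swap P q) else 0 := by
  change (∑ p : Fin N, ∑ q : Fin N, _) = _
  rw [Finset.sum_eq_single P]
  · simp only [true_and]
  · intro b _ hb
    apply Finset.sum_eq_zero
    intro q _
    rw [if_neg]
    rintro ⟨h, _⟩
    exact hb (u.injective (Fin.ext h))
  · simp

theorem Aop_big (k V : ℕ) (hV : N ≤ V) (F : Perm (Fin N) → ℤ) (u : Perm (Fin N)) :
    Aop N k V F u = 0 := by
  change (∑ p : Fin N, ∑ q : Fin N, _) = _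
  refine Finset.sum_eq_zero fun p _ => Finset.sum_eq_zero fun q _ => ?_
  rw [if_neg]
  rintro ⟨h, _⟩
  have := (u p).isLt
  omega

/-- difference operator -/
theorem X_lt (M P : Fin N) (h : P < M) (F : Perm (Fin N) → ℤ) (u : Perm (Fin N)) :
    (Aop N (M.val + 1) (u P).val - Aop N M.val (u P).val) F u =
      - if len (u * swap P M) + 1 = len u then F (u * swap P M) else 0 := by
  rw [LinearMap.sub_apply, Pi.sub_apply, Aop_apply, Aop_apply, ← Finset.sum_sub_distrib,
    Finset.sum_eq_single M]
  · rw [Fin.lt_def] at h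
    rw [if_neg (by omega)]
    simp [h]
  · intro q _ hq
    have : q.val ≠ M.val := fun e => hq (Fin.ext e)
    rw [Fin.lt_def] at h
    rw [sub_eq_zero]
    congr 1
    rw [eq_iff_iff]; omega
  · simp

theorem X_eq (M : Fin N) (F : Perm (Fin N) → ℤ) (u : Perm (Fin N)) :
    (Aop N (M.val + 1) (u M).val - Aop N M.val (u M).val) F u =
      ∑ Q, if M < Q ∧ len (u * swap M Q) + 1 = len u then F (u * swap M Q) else 0 := by
  rw [LinearMap.sub_apply, Pi.sub_apply, Aop_apply, Aop_apply, ← Finset.sum_sub_distrib]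
  refine Finset.sum_congr rfl fun q _ => ?_
  rw [if_neg (c := M.val < M.val ∧ _) (by omega), sub_zero]
  congr 1
  rw [eq_iff_iff, Fin.lt_def]; omega

theorem X_gt (M P : Fin N) (h : M < P) (F : Perm (Fin N) → ℤ) (u : Perm (Fin N)) :
    (Aop N (M.val + 1) (u P).val - Aop N M.val (u P).val) F u = 0 := by
  rw [Fin.lt_def] at h
  rw [LinearMap.sub_apply, Pi.sub_apply, Aop_apply, Aop_apply, ← Finset.sum_sub_distrib]
  refine Finset.sum_eq_zero fun q _ => ?_
  rw [if_neg (by omega), if_neg (by omega), sub_zero]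

theorem X_big (M : Fin N) (V : ℕ) (hV : N ≤ V) (F : Perm (Fin N) → ℤ) (u : Perm (Fin N)) :
    (Aop N (M.val + 1) V - Aop N M.val V) F u = 0 := by
  rw [LinearMap.sub_apply, Pi.sub_apply, Aop_big _ _ hV, Aop_big _ _ hV, sub_zero]

/-- versions with the label given by an equation -/
theorem X_lt' (M P : Fin N) (h : P < M) (F : Perm (Fin N) → ℤ) (u : Perm (Fin N)) (V : ℕ)
    (hV : (u P).val = V) :
    (Aop N (M.val + 1) V - Aop N M.val V) F u =
      - if len (u * swap P M) + 1 = len u then F (u * swap P M) else 0 := by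
  subst hV; exact X_lt M P h F u

theorem X_eq' (M : Fin N) (F : Perm (Fin N) → ℤ) (u : Perm (Fin N)) (V : ℕ)
    (hV : (u M).val = V) :
    (Aop N (M.val + 1) V - Aop N M.val V) F u =
      ∑ Q, if M < Q ∧ len (u * swap M Q) + 1 = len u then F (u * swap M Q) else 0 := by
  subst hV; exact X_eq M F u

theorem X_gt' (M P : Fin N) (h : M < P) (F : Perm (Fin N) → ℤ) (u : Perm (Fin N)) (V : ℕ)
    (hV : (u P).val = V) :
    (Aop N (M.val + 1) V - Aop N M.val V) F u = 0 := by
  subst hV; exact X_gt M P h F u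

theorem Aop_apply' (k : ℕ) (F : Perm (Fin N) → ℤ) (u : Perm (Fin N)) (P : Fin N) (V : ℕ)
    (hV : (u P).val = V) :
    Aop N k V F u = ∑ q : Fin N,
      if P.val < k ∧ k ≤ q.val ∧ len (u * swap P q) + 1 = len u then F (u * swap P q) else 0 := by
  subst hV; exact Aop_apply k F u P

theorem cov_lt {u : Perm (Fin N)} {p q : Fin N} (h : p < q)
    (hc : len (u * swap p q) + 1 = len u) : u q < u p :=
  (len_down_iff u h).mp (by omega)

theorem hz (M : Fin N) (V : ℕ) :
    Aop N (M.val + 1) V * (Aop N (M.val + 1) V - Aop N M.val V) = 0 := by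
  apply LinearMap.ext
  intro F
  ext u
  rw [Module.End.mul_apply]
  by_cases hV : N ≤ V
  · rw [Aop_big _ _ hV]; rfl
  · push Not at hV
    obtain ⟨P, hP⟩ := u.surjective ⟨V, hV⟩
    have hP' : (u P).val = V := by rw [hP]
    rw [Aop_apply' _ _ _ _ _ hP']
    apply Finset.sum_eq_zero
    intro r _
    split_ifs with h
    · exact X_gt' M r (by rw [Fin.lt_def]; omega) _ _ _ (by simp [hP'])
    · rfl

theorem rel_gt (M P : Fin N) (v V : ℕ) (hvV : v < V) (F : Perm (Fin N) → ℤ) (u : Perm (Fin N))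
    (hP : (u P).val = V) (h : M < P) (p : Fin N) (hp : (u p).val = v) :
    (Aop N (M.val + 1) V - Aop N M.val V) (Aop N M.val v F) u =
      Aop N (M.val + 1) v ((Aop N (M.val + 1) V - Aop N M.val V) F) u := by
  rw [X_gt' M P h _ _ _ hP, Aop_apply' _ _ _ _ _ hp]
  symm
  apply Finset.sum_eq_zero
  intro r _
  split_ifs with hc
  · have hpr : p < r := by rw [Fin.lt_def]; omega
    have h1 := cov_lt hpr hc.2.2
    have hpP : P ≠ p := by rintro rfl; omega
    have hrP : P ≠ r := by
      rintro rfl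
      rw [Fin.lt_def] at h1
      omega
    exact X_gt' M P h _ _ _ (by simp [swap_apply_of_ne_of_ne hpP hrP, hP])
  · rfl

theorem ite_sum {ι : Type*} [Fintype ι] (c : Prop) [Decidable c] (f : ι → ℤ) :
    (if c then ∑ i, f i else 0) = ∑ i, if c then f i else 0 := by
  split_ifs <;> simp

theorem ite_key {c1 c2 c3 c4 : Prop} [Decidable c1] [Decidable c2] [Decidable c3] [Decidable c4]
    (a b : ℤ) (h : (c1 ∧ c2) ↔ (c3 ∧ c4)) (hab : a = b := by rfl) :
    (-if c1 then if c2 then a else 0 else 0) = if c3 then (-if c4 then b else 0) else 0 := by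
  subst hab
  by_cases h1 : c1 <;> by_cases h2 : c2 <;> by_cases h3 : c3 <;> by_cases h4 : c4 <;>
    simp_all

theorem rel_lt (M P : Fin N) (v V : ℕ) (hvV : v < V) (F : Perm (Fin N) → ℤ) (u : Perm (Fin N))
    (hP : (u P).val = V) (h : P < M) (p : Fin N) (hp : (u p).val = v) :
    (Aop N (M.val + 1) V - Aop N M.val V) (Aop N M.val v F) u =
      Aop N (M.val + 1) v ((Aop N (M.val + 1) V - Aop N M.val V) F) u := by
  have hpP : p ≠ P := by rintro rfl; omega
  rw [X_lt' M P h _ _ _ hP, Aop_apply' _ _ _ _ _ hp,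
    Aop_apply' _ _ (u * swap P M) (swap P M p) v (by simp [hp]), ite_sum, ← Finset.sum_neg_distrib]
  refine Finset.sum_congr rfl fun r _ => ?_
  have hpv : p.val ≠ P.val := fun e => hpP (Fin.ext e)
  have hPM : P ≠ M := h.ne
  have hp1 : (swap P M p).val < M.val ↔ p.val ≤ M.val := by
    rw [swap_apply_def, if_neg hpP]
    simp only [Fin.lt_def] at h
    split_ifs with e
    · subst e; omega
    · have : p.val ≠ M.val := fun e' => e (Fin.ext e')
      omega
  by_cases hr : M < r
  · have hMr : M ≠ r := hr.ne
    have hPr : P ≠ r := (h.trans hr).ne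
    have ez : u * swap P M * swap (swap P M p) r = u * swap p r * swap P M := by
      have e1 : swap P M r = r := swap_apply_of_ne_of_ne hPr.symm hMr.symm
      have e2 := swap_conj (swap P M) p r (swap_mul_self P M)
      rw [e1] at e2
      rw [e2]
      simp only [← mul_assoc]
      rw [mul_assoc u, swap_mul_self, mul_one]
    rw [ez]
    have hX := X_lt' M P h F (u * swap p r) V (by simp [swap_apply_of_ne_of_ne hpP.symm hPr, hP])
    rw [hX]
    have key : (len (u * swap P M) + 1 = len u ∧ ((swap P M p).val < M.val ∧ M.val ≤ r.val ∧
        len (u * swap p r * swap P M) + 1 = len (u * swap P M))) ↔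
        ((p.val < M.val + 1 ∧ M.val + 1 ≤ r.val ∧ len (u * swap p r) + 1 = len u) ∧
          len (u * swap p r * swap P M) + 1 = len (u * swap p r)) := by
      rw [hp1]
      have hr' : M.val < r.val := hr
      have uM : (u * swap p r) M = if p = M then u r else u M := by
        split_ifs with e
        · subst e; simp
        · simp [swap_apply_of_ne_of_ne (Ne.symm e) hMr]
      have uP : (u * swap p r) P = u P := by simp [swap_apply_of_ne_of_ne hpP.symm hPr]
      constructor
      · rintro ⟨h1, h2, h3, h4⟩
        have d1 := cov_lt h h1
        have hq : swap P M p < r := by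
          rw [Fin.lt_def]; have := hp1.mpr h2; omega
        have d2 := cov_lt hq (u := u * swap P M) (by rw [ez, h4])
        simp only [Perm.mul_apply, swap_apply_self,
          swap_apply_of_ne_of_ne hPr.symm hMr.symm] at d2
        have l1 := len_down u (p := p) (q := r) (by rw [Fin.lt_def]; omega) d2
        have l2 := len_down (u * swap p r) h (by
          rw [uM, uP]
          split_ifs with e
          · rw [Fin.lt_def] at *; omega
          · exact d1)
        omega
      · rintro ⟨⟨h1, h2, h3⟩, h4⟩
        have hpr : p < r := by rw [Fin.lt_def]; omega
        have d1 := cov_lt hpr h3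
        have d2 := cov_lt h h4
        rw [uM, uP] at d2
        have l1 := len_down u h (by
          split_ifs at d2 with e
          · subst e; rw [Fin.lt_def]; omega
          · exact d2)
        have hq : swap P M p < r := by
          rw [Fin.lt_def]; have := hp1.mpr (by omega); omega
        have l2 := len_down (u * swap P M) hq (by
          simp only [Perm.mul_apply, swap_apply_self,
            swap_apply_of_ne_of_ne hPr.symm hMr.symm]
          exact d1)
        rw [ez] at l2
        omega
    exact ite_key _ _ key
  · rw [if_neg (c := p.val < M.val + 1 ∧ _) (by rw [Fin.lt_def] at hr; omega)]
    rw [neg_eq_zero]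
    split_ifs with h1 h2
    · exfalso
      have : r = M := by apply Fin.ext; rw [Fin.lt_def] at hr; omega
      subst this
      have hq : swap P r p < r := by rw [Fin.lt_def]; omega
      have d2 := cov_lt hq h2.2.2
      simp only [Perm.mul_apply, swap_apply_self, swap_apply_right, Fin.lt_def] at d2
      omega
    · rfl
    · rfl

theorem ite_key2 {c1 c2 c3 c4 : Prop} [Decidable c1] [Decidable c2] [Decidable c3] [Decidable c4]
    (a : ℤ) (h : (c1 ∧ c2) ↔ (c3 ∧ c4)) :
    (if c1 then if c2 then a else 0 else 0) = if c3 then (if c4 then a else 0) else 0 := by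
  by_cases h1 : c1 <;> by_cases h2 : c2 <;> by_cases h3 : c3 <;> by_cases h4 : c4 <;>
    simp_all

theorem rel_eq_key (M Q p r : Fin N) (u : Perm (Fin N)) (hpV : u p < u M) :
    ((M < Q ∧ len (u * swap M Q) + 1 = len u) ∧ ((swap M Q p).val < M.val ∧
      M.val ≤ (swap M Q r).val ∧
        len (u * swap p r * swap M Q) + 1 = len (u * swap M Q))) ↔
    ((p.val < M.val + 1 ∧ M.val + 1 ≤ r.val ∧ len (u * swap p r) + 1 = len u) ∧
      (M < Q ∧ len (u * swap p r * swap M Q) + 1 = len (u * swap p r))) := by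
  by_cases hMQ : M < Q
  swap
  · constructor
    · rintro ⟨⟨h1, _⟩, _⟩; exact absurd h1 hMQ
    · rintro ⟨_, ⟨h1, _⟩⟩; exact absurd h1 hMQ
  have hpM : p ≠ M := by rintro rfl; exact lt_irrefl _ hpV
  have hpMv : p.val ≠ M.val := fun e => hpM (Fin.ext e)
  have hMQv : M.val < Q.val := hMQ
  by_cases hp : p < M
  swap
  · have hp' : M.val < p.val := by rw [Fin.lt_def] at hp; omega
    constructor
    · rintro ⟨_, h1, _⟩
      exfalso
      rw [swap_apply_def, if_neg hpM] at h1
      split_ifs at h1 <;> omega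
    · rintro ⟨⟨h1, _⟩, _⟩; omega
  have hpv : p.val < M.val := hp
  have hpQ : p ≠ Q := (hp.trans hMQ).ne
  have hp1 : swap M Q p = p := swap_apply_of_ne_of_ne hpM hpQ
  have ez : u * swap M Q * swap (swap M Q p) (swap M Q r) = u * swap p r * swap M Q := by
    rw [swap_conj _ _ _ (swap_mul_self M Q)]
    simp only [← mul_assoc]
    rw [mul_assoc u, swap_mul_self, mul_one]
  rw [hp1] at ez ⊢
  have u1p : (u * swap M Q) p = u p := by rw [Perm.mul_apply, hp1]
  have u1r : (u * swap M Q) (swap M Q r) = u r := by rw [Perm.mul_apply, swap_apply_self]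
  constructor
  · rintro ⟨⟨_, h1⟩, h2, h3, h4⟩
    have d1 := cov_lt hMQ h1
    have hq : p < swap M Q r := by rw [Fin.lt_def]; omega
    have d2 := cov_lt (u := u * swap M Q) hq (by rw [ez, h4])
    rw [u1p, u1r] at d2
    have hrM : r ≠ M := by
      rintro rfl
      exact absurd d2 (not_lt.mpr hpV.le)
    have hrv : r.val ≠ M.val := fun e => hrM (Fin.ext e)
    have hr : M.val < r.val := by
      rw [swap_apply_def, if_neg hrM] at h3
      split_ifs at h3 with e
      · subst e; omega
      · omega
    have l1 := len_down u (p := p) (q := r) (by rw [Fin.lt_def]; omega) d2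
    have l2 := len_down (u * swap p r) hMQ (by
      rw [Perm.mul_apply, Perm.mul_apply, swap_apply_of_ne_of_ne hpM.symm hrM.symm]
      by_cases e : Q = r
      · subst e; rw [swap_apply_right]; exact hpV
      · rw [swap_apply_of_ne_of_ne hpQ.symm e]; exact d1)
    refine ⟨⟨by omega, by omega, by omega⟩, hMQ, by omega⟩
  · rintro ⟨⟨h1, h2, h3⟩, _, h4⟩
    have hrM : r ≠ M := by rintro rfl; omega
    have d1 := cov_lt (p := p) (q := r) (by rw [Fin.lt_def]; omega) h3
    have d2 := cov_lt hMQ h4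
    rw [Perm.mul_apply, Perm.mul_apply, swap_apply_of_ne_of_ne hpM.symm hrM.symm] at d2
    have l1 := len_down u hMQ (by
      by_cases e : Q = r
      · subst e; exact d1.trans hpV
      · rwa [swap_apply_of_ne_of_ne hpQ.symm e] at d2)
    have hq : M.val ≤ (swap M Q r).val := by
      rw [swap_apply_def, if_neg hrM]
      split_ifs <;> omega
    have l2 := len_down (u * swap M Q) (p := p) (q := swap M Q r) (by rw [Fin.lt_def]; omega) (by
      rw [u1p, u1r]; exact d1)
    rw [ez] at l2
    refine ⟨⟨hMQ, by omega⟩, hpv, hq, by omega⟩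

theorem rel_eq (M : Fin N) (v V : ℕ) (hvV : v < V) (F : Perm (Fin N) → ℤ) (u : Perm (Fin N))
    (hP : (u M).val = V) (p : Fin N) (hp : (u p).val = v) :
    (Aop N (M.val + 1) V - Aop N M.val V) (Aop N M.val v F) u =
      Aop N (M.val + 1) v ((Aop N (M.val + 1) V - Aop N M.val V) F) u := by
  have hpM : p ≠ M := by rintro rfl; omega
  rw [X_eq' M _ _ _ hP, Aop_apply' _ _ _ _ _ hp]
  have e1 : ∀ Q : Fin N, (if M < Q ∧ len (u * swap M Q) + 1 = len u then
      Aop N M.val v F (u * swap M Q) else 0) =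
      ∑ r, if (M < Q ∧ len (u * swap M Q) + 1 = len u) then
        (if (swap M Q p).val < M.val ∧ M.val ≤ (swap M Q r).val ∧
        len (u * swap p r * swap M Q) + 1 = len (u * swap M Q) then
          F (u * swap p r * swap M Q) else 0) else 0 := by
    intro Q
    rw [Aop_apply' _ _ (u * swap M Q) (swap M Q p) v (by simp [hp]), ite_sum,
      ← Equiv.sum_comp (swap M Q)]
    refine Finset.sum_congr rfl fun r _ => ?_
    have ez : u * swap M Q * swap (swap M Q p) (swap M Q r) = u * swap p r * swap M Q := by
      rw [swap_conj _ _ _ (swap_mul_self M Q)]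
      simp only [← mul_assoc]
      rw [mul_assoc u, swap_mul_self, mul_one]
    rw [ez]
  have e2 : ∀ r : Fin N, (if p.val < M.val + 1 ∧ M.val + 1 ≤ r.val ∧ len (u * swap p r) + 1 = len u
      then (Aop N (M.val + 1) V - Aop N M.val V) F (u * swap p r) else 0) =
      ∑ Q, if p.val < M.val + 1 ∧ M.val + 1 ≤ r.val ∧ len (u * swap p r) + 1 = len u then
        (if M < Q ∧ len (u * swap p r * swap M Q) + 1 = len (u * swap p r) then
          F (u * swap p r * swap M Q) else 0) else 0 := by
    intro r
    rw [← ite_sum]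
    split_ifs with h
    · have hrM : r ≠ M := by rintro rfl; omega
      rw [X_eq' M _ _ _ (by simp [swap_apply_of_ne_of_ne hpM.symm hrM.symm, hP])]
    · rfl
  rw [Finset.sum_congr rfl fun Q _ => e1 Q, Finset.sum_congr rfl fun Q _ => e2 Q, Finset.sum_comm]
  refine Finset.sum_congr rfl fun r _ => Finset.sum_congr rfl fun Q _ => ?_
  exact ite_key2 _ (rel_eq_key M Q p r u (by rw [Fin.lt_def]; omega))

theorem rel (M : Fin N) (v V : ℕ) (hvV : v < V) :
    (Aop N (M.val + 1) V - Aop N M.val V) * Aop N M.val v =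
      Aop N (M.val + 1) v * (Aop N (M.val + 1) V - Aop N M.val V) := by
  apply LinearMap.ext
  intro F
  ext u
  rw [Module.End.mul_apply, Module.End.mul_apply]
  by_cases hV : N ≤ V
  · rw [X_big M V hV]
    have : (Aop N (M.val + 1) V - Aop N M.val V) F = 0 := by
      ext u'; exact X_big M V hV F u'
    rw [this, map_zero]; rfl
  · push Not at hV
    obtain ⟨P, hP⟩ := u.surjective ⟨V, hV⟩
    have hP' : (u P).val = V := by rw [hP]
    obtain ⟨p, hp⟩ := u.surjective ⟨v, hvV.trans hV⟩
    have hp' : (u p).val = v := by rw [hp]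
    rcases lt_trichotomy P M with h | h | h
    · exact rel_lt M P v V hvV F u hP' h p hp'
    · subst h; exact rel_eq P v V hvV F u hP' p hp'
    · exact rel_gt M P v V hvV F u hP' h p hp'

/-- the sum of the difference operators is the Monk operator -/
theorem X_sum (M : Fin N) (F : Perm (Fin N) → ℤ) (u : Perm (Fin N)) :
    (∑ v ∈ Finset.range N, (Aop N (M.val + 1) v - Aop N M.val v)) F u =
      ∑ b, if len (u * swap M b) + 1 = len u then sg M b * F (u * swap M b) else 0 := by
  rw [LinearMap.sum_apply, Finset.sum_apply, Finset.sum_range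
    (fun v => ((Aop N (M.val + 1) v - Aop N M.val v) F) u), ← Equiv.sum_comp u]
  have e : ∀ P : Fin N, ((Aop N (M.val + 1) (u P).val - Aop N M.val (u P).val) F) u =
      (if P < M then - (if len (u * swap P M) + 1 = len u then F (u * swap P M) else 0) else 0) +
      (if P = M then ∑ Q, if M < Q ∧ len (u * swap M Q) + 1 = len u then F (u * swap M Q) else 0
        else 0) := by
    intro P
    rcases lt_trichotomy P M with h | h | h
    · rw [X_lt M P h, if_pos h, if_neg h.ne, add_zero]
    · subst h; rw [X_eq, if_pos rfl, if_neg (lt_irrefl _), zero_add]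
    · rw [X_gt M P h, if_neg h.ne', if_neg (not_lt.mpr h.le), add_zero]
  rw [Finset.sum_congr rfl fun P _ => e P, Finset.sum_add_distrib, Finset.sum_ite_eq',
    if_pos (Finset.mem_univ _), ← Finset.sum_add_distrib]
  refine Finset.sum_congr rfl fun b _ => ?_
  unfold sg
  rcases lt_trichotomy b M with h | h | h
  · rw [if_pos h, if_neg (c := M < b ∧ _) (fun h' => absurd h'.1 (not_lt.mpr h.le)),
      if_neg (not_lt.mpr h.le), swap_comm b M]
    split_ifs <;> simp
  · subst h
    have : (swap b b : Perm (Fin N)) = 1 := swap_self b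
    rw [this, mul_one]
    simp
  · rw [if_neg (not_lt.mpr h.le), if_pos h]
    simp [h]

/-- complete symmetric polynomials by recursion -/
noncomputable def hh (N : ℕ) [NeZero N] : ℕ → ℕ → MvPolynomial (Fin N) ℤ
  | _, 0 => 1
  | 0, _ + 1 => 0
  | k + 1, m + 1 => hh N k (m + 1) + hh N (k + 1) m * X (pos N (k + 1))

theorem hh_zero (k : ℕ) : hh N k 0 = 1 := by cases k <;> rw [hh]

theorem Pop_k0 (V m : ℕ) : Pop (Aop N 0) V (m + 1) = 0 := by
  induction V with
  | zero => rfl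
  | succ V ih =>
    rw [Pop, ih, zero_add]
    have : Aop N 0 V = 0 := by
      apply LinearMap.ext; intro F; ext u
      change (∑ p : Fin N, ∑ q : Fin N, _) = _
      refine Finset.sum_eq_zero fun p _ => Finset.sum_eq_zero fun q _ => ?_
      rw [if_neg]
      rintro ⟨_, h, _⟩
      omega
    rw [this, zero_mul]

theorem phi_hh (k m : ℕ) (hk : k ≤ N) (f : MvPolynomial (Fin N) ℤ) (u : Perm (Fin N)) :
    phi u (hh N k m * f) = Pop (Aop N k) N m (fun v => phi v f) u := by
  induction k generalizing m f u with
  | zero =>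
    cases m with
    | zero => rw [hh_zero, Pop_zero, one_mul]; rfl
    | succ m => rw [hh, Pop_k0, zero_mul, phi_zero]; rfl
  | succ k ih =>
    induction m generalizing f u with
    | zero => rw [hh_zero, Pop_zero, one_mul]; rfl
    | succ m ihm =>
      have hM : ∃ M : Fin N, M.val = k := ⟨⟨k, by omega⟩, rfl⟩
      obtain ⟨M, rfl⟩ := hM
      rw [hh, add_mul, phi_add, ih _ (by omega), mul_assoc, ihm, pos_succ,
        Pop_key (Aop N M.val) (Aop N (M.val + 1)) (rel M) (hz M)]
      rw [LinearMap.add_apply, Pi.add_apply, Module.End.mul_apply]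
      have e : (fun v => phi v (X M * f)) =
          (∑ v ∈ Finset.range N, (Aop N (M.val + 1) v - Aop N M.val v)) (fun v => phi v f) := by
        funext v
        rw [X_sum, monk]
      rw [e]

end

section
variable {N : ℕ} [NeZero N]

theorem rPerm_zero (k : ℕ) : rPerm N k 0 = 1 := by simp [rPerm]

theorem rPerm_succ (k m : ℕ) :
    rPerm N k (m + 1) = rPerm N k m * swap (pos N k) (pos N (k + 1 + m)) := by
  simp [rPerm, List.range_succ, t]

theorem rPerm_val (k m : ℕ) (hk : 1 ≤ k) (hkm : k + m ≤ N) (x : Fin N) :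
    (rPerm N k m x).val = if x.val = k - 1 then k - 1 + m else
      if k ≤ x.val ∧ x.val ≤ k + m - 1 then x.val - 1 else x.val := by
  induction m generalizing x with
  | zero =>
    rw [rPerm_zero, Perm.one_apply]
    split_ifs <;> omega
  | succ m ih =>
    have h1 := pos_val (N := N) (j := k) hk (by omega)
    have h2 := pos_val (N := N) (j := k + 1 + m) (by omega) (by omega)
    rw [rPerm_succ, Perm.mul_apply, ih (by omega), swap_apply_def]
    simp only [Fin.ext_iff]
    split_ifs <;> omega

theorem rPerm_len (k m : ℕ) (hk : 1 ≤ k) (hkm : k + (m + 1) ≤ N) :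
    len (rPerm N k (m + 1)) = len (rPerm N k m) + 1 := by
  have h1 := pos_val (N := N) (j := k) hk (by omega)
  have h2 := pos_val (N := N) (j := k + 1 + m) (by omega) (by omega)
  have v1 := rPerm_val k m hk (by omega) (pos N k)
  have v2 := rPerm_val k m hk (by omega) (pos N (k + 1 + m))
  rw [if_pos (by omega)] at v1
  rw [if_neg (by omega), if_neg (by omega)] at v2
  have l1 := len_up (rPerm N k m) (p := pos N k) (q := pos N (k + 1 + m))
    (by rw [Fin.lt_def]; omega) (by rw [Fin.lt_def]; omega)
  rw [← rPerm_succ] at l1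
  have e : rPerm N k (m + 1) =
      swap (rPerm N k m (pos N k)) (rPerm N k m (pos N (k + 1 + m))) * rPerm N k m := by
    rw [rPerm_succ, Equiv.mul_swap_eq_swap_mul]
  have l2 := len_mul_le (swap (rPerm N k m (pos N k)) (rPerm N k m (pos N (k + 1 + m))))
    (rPerm N k m)
  rw [← e] at l2
  have hadj : (rPerm N k m (pos N k)).val + 1 = (rPerm N k m (pos N (k + 1 + m))).val := by omega
  have l3 := len_adj_up 1 hadj (by rw [Fin.lt_def]; simp only [Perm.one_apply]; omega)
  rw [one_mul, len_one] at l3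
  omega

/-- delta functions -/
noncomputable def dl (v : Perm (Fin N)) : Perm (Fin N) → ℤ := fun u => if u = v then 1 else 0

theorem Aop_dl (k m V : ℕ) (hk : 1 ≤ k) (hkN : k ≤ N) (hV : V < N) (hm : m = 0 ∨ k + m ≤ V) :
    Aop N k V (dl (rPerm N k m)) = if V = k + m then dl (rPerm N k (m + 1)) else 0 := by
  ext u
  have hkm : k + m ≤ N := by omega
  have val := rPerm_val (N := N) k m hk hkm
  have key : ∀ p q : Fin N, ((u p).val = V ∧ p.val < k ∧ k ≤ q.val ∧ len (u * swap p q) + 1 = len u)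
      → u * swap p q = rPerm N k m → p = pos N k ∧ q = pos N (k + 1 + m) ∧ V = k + m ∧
        u = rPerm N k (m + 1) := by
    rintro p q ⟨h1, h2, h3, h4⟩ h5
    have hu : u = rPerm N k m * swap p q := by rw [← h5, mul_assoc, swap_mul_self, mul_one]
    have hq := val q
    have e : (rPerm N k m q).val = V := by rw [← h5]; simp [h1]
    rw [e, if_neg (by omega)] at hq
    have hqV : q.val = V := by
      split_ifs at hq <;> omega
    have hVk : k + m ≤ V := by omega
    have hpk := pos_val (N := N) (j := k) hk (by omega)
    have hc : len (rPerm N k m) + 1 = len (rPerm N k m * swap p q) := by rw [← hu, ← h5, h4]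
    have hp : p = pos N k := by
      by_contra hne
      have hne' : p.val ≠ (pos N k).val := fun e => hne (Fin.ext e)
      refine len_not_cover (rPerm N k m) (p := p) (r := pos N k) (q := q) ?_ ?_ ?_ ?_ hc
      · rw [Fin.lt_def]; omega
      · rw [Fin.lt_def]; omega
      · rw [Fin.lt_def, val, val, if_neg (by omega), if_neg (by omega), if_pos (by omega)]; omega
      · rw [Fin.lt_def, e, val, if_pos (by omega)]; omega
    have hVe : V = k + m := by
      by_contra hne
      have hpm := pos_val (N := N) (j := k + 1 + m) (by omega) (by omega)
      refine len_not_cover (rPerm N k m) (p := p) (r := pos N (k + 1 + m)) (q := q) ?_ ?_ ?_ ?_ hc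
      · rw [Fin.lt_def]; omega
      · rw [Fin.lt_def]; omega
      · rw [hp, Fin.lt_def, val, val, if_pos (by omega), if_neg (by omega), if_neg (by omega)]
        omega
      · rw [Fin.lt_def, e, val, if_neg (by omega), if_neg (by omega)]; omega
    have hpm := pos_val (N := N) (j := k + 1 + m) (by omega) (by omega)
    have hq : q = pos N (k + 1 + m) := Fin.ext (by omega)
    refine ⟨hp, hq, hVe, ?_⟩
    rw [rPerm_succ, hu, hp, hq]
  change (∑ p : Fin N, ∑ q : Fin N, _) = _
  by_cases H : V = k + m ∧ u = rPerm N k (m + 1)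
  · obtain ⟨H1, H2⟩ := H
    have hpk := pos_val (N := N) (j := k) hk (by omega)
    have hpm := pos_val (N := N) (j := k + 1 + m) (by omega) (by omega)
    have hl := rPerm_len (N := N) k m hk (by omega)
    have e : u * swap (pos N k) (pos N (k + 1 + m)) = rPerm N k m := by
      rw [H2, rPerm_succ, mul_assoc, swap_mul_self, mul_one]
    rw [if_pos H1, Finset.sum_eq_single (pos N k), Finset.sum_eq_single (pos N (k + 1 + m))]
    · rw [if_pos, e]
      · unfold dl; rw [if_pos rfl, if_pos H2]
      · refine ⟨?_, by omega, by omega, ?_⟩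
        · rw [H2, rPerm_val k (m + 1) hk (by omega), if_pos (by omega)]; omega
        · rw [e, H2, hl]
    · intro q _ hq
      split_ifs with h
      · unfold dl
        rw [if_neg]
        exact fun h' => hq (key _ _ h h').2.1
      · rfl
    · simp
    · intro p _ hp
      apply Finset.sum_eq_zero
      intro q _
      split_ifs with h
      · unfold dl
        rw [if_neg]
        exact fun h' => hp (key _ _ h h').1
      · rfl
    · simp
  · have : (if V = k + m then dl (rPerm N k (m + 1)) else 0) u = 0 := by
      split_ifs with h
      · unfold dl; rw [if_neg (fun h' => H ⟨h, h'⟩)]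
      · rfl
    rw [this]
    refine Finset.sum_eq_zero fun p _ => Finset.sum_eq_zero fun q _ => ?_
    split_ifs with h
    · unfold dl
      rw [if_neg]
      exact fun h' => H (key _ _ h h').2.2
    · rfl

theorem Pop_dl (k m V : ℕ) (hk : 1 ≤ k) (hkN : k ≤ N) (hV : V ≤ N) :
    Pop (Aop N k) V m (dl 1) = if m = 0 ∨ k + m ≤ V then dl (rPerm N k m) else 0 := by
  induction V generalizing m with
  | zero =>
    cases m with
    | zero => rw [Pop_zero, if_pos (Or.inl rfl), rPerm_zero]; rfl
    | succ m => rw [if_neg (by omega)]; rfl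
  | succ V ih =>
    cases m with
    | zero => rw [Pop_zero, if_pos (Or.inl rfl), rPerm_zero]; rfl
    | succ m =>
      rw [Pop, LinearMap.add_apply, Module.End.mul_apply, ih _ (by omega), ih _ (by omega)]
      by_cases h : m = 0 ∨ k + m ≤ V
      · rw [if_pos h, Aop_dl k m V hk hkN (by omega) h]
        by_cases h1 : V = k + m
        · rw [if_pos h1, if_neg (by omega), if_pos (by omega), zero_add]
        · rw [if_neg h1, add_zero]
          congr 1
          rw [eq_iff_iff]; omega
      · rw [if_neg h, map_zero, if_neg (by omega), if_neg (by omega), add_zero]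

theorem phi_hh_eq (k m : ℕ) (hk : 1 ≤ k) (hkm : k + m ≤ N) (u : Perm (Fin N)) :
    phi u (hh N k m) = phi u (schubertPoly N (rPerm N k m)) := by
  have h := phi_hh k m (by omega) 1 u
  have e : (fun v : Perm (Fin N) => phi v (1 : MvPolynomial (Fin N) ℤ)) = dl 1 := by
    funext v
    rw [← C_1, phi_C]; rfl
  rw [mul_one, e, Pop_dl k m N hk (by omega) le_rfl, if_pos (Or.inr hkm)] at h
  rw [h, phi_schubert]; rfl

theorem phi_mul_zero (f g : MvPolynomial (Fin N) ℤ) (h : ∀ u, phi u g = 0) (u : Perm (Fin N)) :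
    phi u (f * g) = 0 := by
  induction f using MvPolynomial.induction_on generalizing u with
  | C a =>
    have e : phi u (C a * g) = a * phi u g := by
      unfold phi
      rw [D_symm_mul u _ _ (MvPolynomial.IsSymmetric.C a)]
      simp
    rw [e, h, mul_zero]
  | add p q hp hq => rw [add_mul, phi_add, hp, hq, add_zero]
  | mul_X p i hp =>
    rw [mul_comm p, mul_assoc, monk]
    apply Finset.sum_eq_zero
    intro b _
    rw [hp]; simp

/-- the functional on the quotient -/
theorem phi_congr (u : Perm (Fin N)) (f g : MvPolynomial (Fin N) ℤ)
    (h : Ideal.Quotient.mk (symIdeal N) f = Ideal.Quotient.mk (symIdeal N) g) :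
    phi u f = phi u g := by
  rw [Ideal.Quotient.eq] at h
  have := phi_sym u _ h
  rw [phi_sub] at this
  omega

theorem coeff_eq (k m : ℕ) (hk : 1 ≤ k) (hkm : k + m ≤ N) (w w' : Perm (Fin N))
    (c : Perm (Fin N) → ℤ)
    (hc : SS N w * SS N (rPerm N k m) = ∑ u, c u • SS N u) :
    c w' = Pop (Aop N k) N m (dl w) w' := by
  have h1 : Ideal.Quotient.mk (symIdeal N) (schubertPoly N w * schubertPoly N (rPerm N k m)) =
      Ideal.Quotient.mk (symIdeal N) (∑ u, c u • schubertPoly N u) := by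
    rw [map_mul, map_sum]
    simp only [map_zsmul]
    exact hc
  have h2 := phi_congr w' _ _ h1
  have h3 : phi w' (∑ u, c u • schubertPoly N u) = c w' := by
    change phiHom w' _ = _
    rw [map_sum]
    simp only [map_zsmul]
    have : ∀ u, phiHom w' (schubertPoly N u) = if w' = u then 1 else 0 := phi_schubert w'
    simp [this]
  rw [h3] at h2
  rw [← h2]
  have h4 := phi_mul_zero (schubertPoly N w) (hh N k m - schubertPoly N (rPerm N k m))
    (fun u => by rw [phi_sub, phi_hh_eq k m hk hkm, sub_self]) w'
  rw [mul_sub, phi_sub, mul_comm _ (hh N k m), phi_hh k m (by omega)] at h4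
  have e : (fun v : Perm (Fin N) => phi v (schubertPoly N w)) = dl w := by
    funext v
    rw [phi_schubert]; rfl
  rw [e] at h4
  omega

end

section
variable {N : ℕ} [NeZero N]

theorem tProd_succ (a b : ℕ → ℕ) (i : ℕ) :
    tProd N a b (i + 1) = tProd N a b i * swap (pos N (a i)) (pos N (b i)) := by
  simp [tProd, List.range_succ, t]

theorem tProd_zero (a b : ℕ → ℕ) : tProd N a b 0 = 1 := by simp [tProd]

theorem tProd_congr {a b a' b' : ℕ → ℕ} (i : ℕ) (h : ∀ j, j < i → a j = a' j ∧ b j = b' j) :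
    tProd N a b i = tProd N a' b' i := by
  induction i with
  | zero => rw [tProd_zero, tProd_zero]
  | succ i ih =>
    rw [tProd_succ, tProd_succ, ih (fun j hj => h j (by omega)), (h i (by omega)).1,
      (h i (by omega)).2]

theorem label_congr (w : Perm (Fin N)) {a b a' b' : ℕ → ℕ} (i : ℕ)
    (h : ∀ j, j < i + 1 → a j = a' j ∧ b j = b' j) :
    label w a b i = label w a' b' i := by
  unfold label
  rw [tProd_congr (i + 1) h, (h i (by omega)).1]

/-- increasing paths with bounded labels -/
def QP (k V m : ℕ) (w u : Perm (Fin N)) (ab : (ℕ → ℕ) × (ℕ → ℕ)) : Prop :=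
  PathWit N k m w u ab ∧
    (∀ i j, i < j → j < m → label w ab.1 ab.2 i < label w ab.1 ab.2 j) ∧
    ∀ i, i < m → label w ab.1 ab.2 i ≤ V

/-- set the `m`-th entries -/
def upd (m x y : ℕ) (ab : (ℕ → ℕ) × (ℕ → ℕ)) : (ℕ → ℕ) × (ℕ → ℕ) :=
  (Function.update ab.1 m x, Function.update ab.2 m y)

theorem upd_lt {m x y j : ℕ} (ab : (ℕ → ℕ) × (ℕ → ℕ)) (h : j ≠ m) :
    (upd m x y ab).1 j = ab.1 j ∧ (upd m x y ab).2 j = ab.2 j := by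
  simp [upd, Function.update_of_ne h]

theorem upd_self {m x y : ℕ} (ab : (ℕ → ℕ) × (ℕ → ℕ)) :
    (upd m x y ab).1 m = x ∧ (upd m x y ab).2 m = y := by
  simp [upd]

theorem QP_upd {k V m : ℕ} {w u : Perm (Fin N)} {p q : Fin N} {ab : (ℕ → ℕ) × (ℕ → ℕ)}
    (h : QP k V m w (u * swap p q) ab)
    (hc : (u p).val = V ∧ p.val < k ∧ k ≤ q.val ∧ len (u * swap p q) + 1 = len u) :
    QP k (V + 1) (m + 1) w u (upd m (p.val + 1) (q.val + 1) ab) ∧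
      label w (upd m (p.val + 1) (q.val + 1) ab).1 (upd m (p.val + 1) (q.val + 1) ab).2 m = V + 1 := by
  obtain ⟨⟨⟨s1, s2⟩, hu, hz⟩, hinc, hle⟩ := h
  obtain ⟨c1, c2, c3, c4⟩ := hc
  set ab' := upd m (p.val + 1) (q.val + 1) ab with hab'
  have eq1 : ∀ j, j ≠ m → ab'.1 j = ab.1 j ∧ ab'.2 j = ab.2 j := fun j hj => upd_lt ab hj
  have eqm : ab'.1 m = p.val + 1 ∧ ab'.2 m = q.val + 1 := upd_self ab
  have tp : ∀ i, i ≤ m → tProd N ab'.1 ab'.2 i = tProd N ab.1 ab.2 i := fun i hi =>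
    tProd_congr i (fun j hj => eq1 j (by omega))
  have lb : ∀ i, i < m → label w ab'.1 ab'.2 i = label w ab.1 ab.2 i := fun i hi =>
    label_congr w i (fun j hj => eq1 j (by omega))
  have hu' : w * tProd N ab'.1 ab'.2 (m + 1) = u := by
    rw [tProd_succ, tp m le_rfl, ← mul_assoc, ← hu, eqm.1, eqm.2, pos_succ, pos_succ, mul_assoc,
      swap_mul_self, mul_one]
  have lbm : label w ab'.1 ab'.2 m = V + 1 := by
    unfold label
    rw [hu', eqm.1, val, pos_succ, c1]
  refine ⟨⟨⟨⟨?_, ?_⟩, hu'.symm, ?_⟩, ?_, ?_⟩, lbm⟩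
  · intro i hi
    by_cases him : i = m
    · subst him
      rw [eqm.1, eqm.2]
      have := q.isLt
      omega
    · rw [(eq1 i him).1, (eq1 i him).2]
      exact s1 i (by omega)
  · intro i hi
    by_cases him : i = m + 1
    · subst him
      rw [hu']
      have := s2 m le_rfl
      rw [← hu] at this
      omega
    · rw [tp i (by omega)]
      exact s2 i (by omega)
  · intro i hi
    rw [(eq1 i (by omega)).1, (eq1 i (by omega)).2]
    exact hz i (by omega)
  · intro i j hij hj
    by_cases hjm : j = m
    · subst hjm
      rw [lbm, lb i hij]
      have := hle i hij
      omega
    · rw [lb i (by omega), lb j (by omega)]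
      exact hinc i j hij (by omega)
  · intro i hi
    by_cases him : i = m
    · subst him; omega
    · rw [lb i (by omega)]
      have := hle i (by omega)
      omega

theorem QP_trunc {k V m : ℕ} {w u : Perm (Fin N)} {ab : (ℕ → ℕ) × (ℕ → ℕ)}
    (h : QP k (V + 1) (m + 1) w u ab) (hl : label w ab.1 ab.2 m = V + 1) :
    ∃ p q : Fin N, ((u p).val = V ∧ p.val < k ∧ k ≤ q.val ∧ len (u * swap p q) + 1 = len u) ∧
      ∃ ab', QP k V m w (u * swap p q) ab' ∧ upd m (p.val + 1) (q.val + 1) ab' = ab := by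
  obtain ⟨⟨⟨s1, s2⟩, hu, hz⟩, hinc, hle⟩ := h
  obtain ⟨a1, a2, a3, a4⟩ := s1 m (by omega)
  have hp := pos_val (N := N) (j := ab.1 m) a1 (by omega)
  have hq := pos_val (N := N) (j := ab.2 m) (by omega) a4
  have hu2 : u * swap (pos N (ab.1 m)) (pos N (ab.2 m)) = w * tProd N ab.1 ab.2 m := by
    rw [hu, tProd_succ, ← mul_assoc, mul_assoc, swap_mul_self, mul_one]
  refine ⟨pos N (ab.1 m), pos N (ab.2 m), ⟨?_, by omega, by omega, ?_⟩, upd m 0 0 ab, ?_, ?_⟩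
  · unfold label at hl
    rw [← hu, val] at hl
    omega
  · rw [hu2, hu, s2 m (by omega), s2 (m + 1) le_rfl]; omega
  · have eq1 : ∀ j, j ≠ m → (upd m 0 0 ab).1 j = ab.1 j ∧ (upd m 0 0 ab).2 j = ab.2 j :=
      fun j hj => upd_lt ab hj
    have eqm : (upd m 0 0 ab).1 m = 0 ∧ (upd m 0 0 ab).2 m = 0 := upd_self ab
    have tp : ∀ i, i ≤ m → tProd N (upd m 0 0 ab).1 (upd m 0 0 ab).2 i = tProd N ab.1 ab.2 i :=
      fun i hi => tProd_congr i (fun j hj => eq1 j (by omega))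
    have lb : ∀ i, i < m → label w (upd m 0 0 ab).1 (upd m 0 0 ab).2 i = label w ab.1 ab.2 i :=
      fun i hi => label_congr w i (fun j hj => eq1 j (by omega))
    refine ⟨⟨⟨?_, ?_⟩, ?_, ?_⟩, ?_, ?_⟩
    · intro i hi
      rw [(eq1 i (by omega)).1, (eq1 i (by omega)).2]
      exact s1 i (by omega)
    · intro i hi
      rw [tp i hi]
      exact s2 i (by omega)
    · rw [tp m le_rfl, hu2]
    · intro i hi
      by_cases him : i = m
      · subst him; exact eqm
      · rw [(eq1 i him).1, (eq1 i him).2]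
        exact hz i (by omega)
    · intro i j hij hj
      rw [lb i (by omega), lb j hj]
      exact hinc i j hij (by omega)
    · intro i hi
      rw [lb i hi]
      have := hinc i m hi (by omega)
      omega
  · rw [hp, hq]
    simp [upd]

theorem QP_mono {k V m : ℕ} {w u : Perm (Fin N)} {ab : (ℕ → ℕ) × (ℕ → ℕ)}
    (h : QP k V m w u ab) : QP k (V + 1) m w u ab :=
  ⟨h.1, h.2.1, fun i hi => (h.2.2 i hi).trans (by omega)⟩

theorem QP_count (k V m : ℕ) (w : Perm (Fin N)) : ∀ u : Perm (Fin N),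
    ∃ S : Finset ((ℕ → ℕ) × (ℕ → ℕ)), (∀ ab, ab ∈ S ↔ QP k V m w u ab) ∧
      (S.card : ℤ) = Pop (Aop N k) V m (dl w) u := by
  have base : ∀ V, ∀ u : Perm (Fin N),
    ∃ S : Finset ((ℕ → ℕ) × (ℕ → ℕ)), (∀ ab, ab ∈ S ↔ QP k V 0 w u ab) ∧
      (S.card : ℤ) = Pop (Aop N k) V 0 (dl w) u := by
    intro V u
    rw [Pop_zero]
    by_cases hu : u = w
    · subst hu
      refine ⟨{(0, 0)}, ?_, ?_⟩
      · intro ab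
        rw [Finset.mem_singleton]
        constructor
        · rintro rfl
          refine ⟨⟨⟨by intro i hi; omega, ?_⟩, by rw [tProd_zero, mul_one], fun i _ => ⟨rfl, rfl⟩⟩,
            by intro i j _ hj; omega, by intro i hi; omega⟩
          intro i hi
          have : i = 0 := by omega
          subst this
          rw [tProd_zero, mul_one]; omega
        · rintro ⟨⟨_, _, h⟩, _⟩
          exact Prod.ext (funext fun i => (h i (by omega)).1) (funext fun i => (h i (by omega)).2)
      · simp [dl]
    · refine ⟨∅, ?_, ?_⟩
      · intro ab
        simp only [Finset.notMem_empty, false_iff]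
        rintro ⟨⟨_, h, _⟩, _⟩
        rw [tProd_zero, mul_one] at h
        exact hu h
      · simp [dl, hu]
  induction V generalizing m with
  | zero =>
    cases m with
    | zero => exact base 0
    | succ m =>
      intro u
      refine ⟨∅, ?_, by simp [Pop]⟩
      intro ab
      simp only [Finset.notMem_empty, false_iff]
      rintro ⟨_, _, h⟩
      have := h 0 (by omega)
      unfold label val at this
      omega
  | succ V ih =>
    cases m with
    | zero => exact base _
    | succ m =>
      intro u
      choose S1 h1 h1c using ih (m + 1)
      choose S2 h2 h2c using ih m
      let P : Finset (Fin N × Fin N) := Finset.univ.filter fun x =>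
        (u x.1).val = V ∧ x.1.val < k ∧ k ≤ x.2.val ∧ len (u * swap x.1 x.2) + 1 = len u
      let T : Fin N × Fin N → Finset ((ℕ → ℕ) × (ℕ → ℕ)) := fun x =>
        (S2 (u * swap x.1 x.2)).image (upd m (x.1.val + 1) (x.2.val + 1))
      have hdisj : Disjoint (S1 u) (P.biUnion T) := by
        rw [Finset.disjoint_left]
        intro ab hab hab2
        rw [h1] at hab
        rw [Finset.mem_biUnion] at hab2
        obtain ⟨x, hx, hx2⟩ := hab2
        rw [Finset.mem_image] at hx2
        obtain ⟨ab', hab', rfl⟩ := hx2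
        rw [h2] at hab'
        rw [Finset.mem_filter] at hx
        have := (QP_upd hab' hx.2).2
        have := hab.2.2 m (by omega)
        omega
      refine ⟨S1 u ∪ P.biUnion T, ?_, ?_⟩
      · intro ab
        rw [Finset.mem_union, h1, Finset.mem_biUnion]
        constructor
        · rintro (h | ⟨x, hx, hx2⟩)
          · exact QP_mono h
          · rw [Finset.mem_image] at hx2
            obtain ⟨ab', hab', rfl⟩ := hx2
            rw [h2] at hab'
            rw [Finset.mem_filter] at hx
            exact (QP_upd hab' hx.2).1
        · intro h
          by_cases hl : label w ab.1 ab.2 m = V + 1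
          · right
            obtain ⟨p, q, hc, ab', hab', e⟩ := QP_trunc h hl
            refine ⟨(p, q), ?_, ?_⟩
            · rw [Finset.mem_filter]
              exact ⟨Finset.mem_univ _, hc⟩
            · rw [Finset.mem_image]
              exact ⟨ab', (h2 _ _).mpr hab', e⟩
          · left
            refine ⟨h.1, h.2.1, fun i hi => ?_⟩
            have a1 := h.2.2 m (by omega)
            by_cases him : i = m
            · subst him; omega
            · have := h.2.1 i m (by omega) (by omega)
              omega
      · rw [Finset.card_union_of_disjoint hdisj, Finset.card_biUnion]
        · rw [Pop, LinearMap.add_apply, Pi.add_apply, Module.End.mul_apply]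
          push_cast
          rw [h1c]
          congr 1
          have e : ∀ x ∈ P, ((T x).card : ℤ) = Pop (Aop N k) V m (dl w) (u * swap x.1 x.2) := by
            intro x hx
            rw [← h2c, Finset.card_image_of_injOn]
            intro ab hab ab' hab' heq
            rw [Finset.mem_coe, h2] at hab hab'
            have z1 := hab.1.2.2 m le_rfl
            have z2 := hab'.1.2.2 m le_rfl
            have g : ∀ j, ab.1 j = ab'.1 j ∧ ab.2 j = ab'.2 j := by
              intro j
              by_cases hj : j = m
              · subst hj; omega
              · have e1 := upd_lt (x := x.1.val + 1) (y := x.2.val + 1) ab hj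
                have e2 := upd_lt (x := x.1.val + 1) (y := x.2.val + 1) ab' hj
                rw [heq] at e1
                omega
            exact Prod.ext (funext fun i => (g i).1) (funext fun i => (g i).2)
          rw [Finset.sum_congr rfl e, Finset.sum_filter, Fintype.sum_prod_type]
          rfl
        · intro x hx y hy hxy
          rw [Function.onFun, Finset.disjoint_left]
          intro ab hab hab2
          rw [Finset.mem_image] at hab hab2
          obtain ⟨ab1, _, e1⟩ := hab
          obtain ⟨ab2, _, e2⟩ := hab2
          have f1 := upd_self (m := m) (x := x.1.val + 1) (y := x.2.val + 1) ab1
          have f2 := upd_self (m := m) (x := y.1.val + 1) (y := y.2.val + 1) ab2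
          rw [e1] at f1
          rw [e2] at f2
          apply hxy
          exact Prod.ext (Fin.ext (by omega)) (Fin.ext (by omega))

theorem IncPaths_count (k m : ℕ) (w u : Perm (Fin N)) :
    ((IncPaths N k m w u).ncard : ℤ) = Pop (Aop N k) N m (dl w) u := by
  obtain ⟨S, h1, h2⟩ := QP_count k N m w u
  rw [← h2]
  have : IncPaths N k m w u = (S : Set _) := by
    ext ab
    rw [Finset.mem_coe, h1]
    constructor
    · intro h
      refine ⟨h.1, h.2, fun i _ => ?_⟩
      unfold label val
      exact Fin.is_lt _
    · intro h
      exact ⟨h.1, h.2.1⟩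
  rw [this, Set.ncard_coe_finset]

end

/-- The structure constant `c^{w'}_{w, r[k,m]}` equals the number of paths of length
`m` in the `k`-Bruhat order from `w` to `w'` with strictly increasing labels
(paths being encoded by their normalized sequences of transpositions).  The
structure constants are encoded by their defining property (here the paper's
`n` is `n+1`). -/
theorem structure_constant_rPerm_eq_card_paths (n k m : ℕ) (hk : 1 ≤ k) (hm : 1 ≤ m)
    (hkm : k + m ≤ n + 1) (w w' : Equiv.Perm (Fin (n + 1)))
    (c : Equiv.Perm (Fin (n + 1)) → ℤ)
    (hc : SS (n + 1) w * SS (n + 1) (rPerm (n + 1) k m) =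
      ∑ u, c u • SS (n + 1) u) :
    c w' = ((IncPaths (n + 1) k m w w').ncard : ℤ) := by
  rw [coeff_eq k m hk hkm w w' c hc, IncPaths_count]

end SchubertPieri
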